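/- All zeros of the entire function Z₂(s) lie on the line Re(s) = 1/2 except for the four real zeros s = −1, 0, 1, 2; that is, every zero ρ of Z₂ with ρ ∉ {−1, 0, 1, 2} satisfies Re(ρ) = 1/2, and moreover each of −1, 0, 1, 2 is a simple zero of Z₂ (Z₂ vanishes there but its derivative does not). -/

import Mathlib

open Complex

noncomputable def chi (s : ℂ) : ℂ := s * (s - 1) * completedRiemannZeta₀ s + 1

noncomputable def A : ℂ := Real.pi / 3 - 1

noncomputable def f1 (s : ℂ) : ℂ :=
  (s - 1) * ((s - 1) * (3 * s - 2) * (A * s - A + 1) * chi (s + 1) * chi (3 * s)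
    - (s + 1) * (s - 2) * chi s * chi (3 * s - 1)
    - 2 * (s - 1) * (s - 2) * chi s * chi (3 * s))

noncomputable def f2 (s : ℂ) : ℂ :=
  (s - 2) * ((A * s + 3) * (s - 1) ^ 2 * chi (s + 2)
    - 2 * (s - 1) * (s - 3) * chi (s + 1)
    - (s + 2) * (s - 3) * chi s)

noncomputable def Z1 (s : ℂ) : ℂ := chi (2 * s) * f1 s - chi (2 * s - 1) * f1 (1 - s)

noncomputable def Z2 (s : ℂ) : ℂ := chi (2 * s) * f2 s - chi (2 * s - 1) * f2 (1 - s)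

/-!
Up to the factor `(s - 2) (s + 1) s (s - 1)`, the function `Z2 s` equals `H s - H (1 - s)` for an
entire function `H`. The zeros off the critical line are excluded by `‖H (1 - s)‖ < ‖H s‖` for
`1 / 2 < re s`: the two sides agree on the critical line because `H` is real on the real axis, so
the inequality follows from the Phragmén–Lindelöf and maximum principles once `H` has no zeros
with `1 / 2 ≤ re s`.

For the latter, `H` is divided by the size `chi (2 s) chi (s + 2) (A s + 3) / (s + 1)` of its main
term. The real part of the quotient is harmonic and bounded, so a positive lower bound on the
critical line extends to the half-plane. The quotient is a rational expression in `s` and the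
ratios `chi w / chi (w + 1)`, which are at most `1` in norm for `0 ≤ re w` by Phragmén–Lindelöf.
For `|im s| ≥ 25` this is enough; for `|im s| < 25` the ratios are evaluated by verified
fixed-point arithmetic on a cover of the line by short segments, using Euler–Maclaurin summation
for `ζ` and a product formula for `Γ (z + 1 / 2) / Γ z`.

Before dividing by `s (s - 1)`, `H` is corrected by a multiple of
`chi s (chi (2 s) + chi (2 s - 1))`, which is invariant under `s ↦ 1 - s` and makes the numerator
vanish at `0` and `1`.
-/

open Set Filter Topology MeasureTheory Asymptotics Bornology ComplexConjugate
open scoped Interval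

section Chi

lemma differentiable_chi : Differentiable ℂ chi := by
  have := differentiable_completedZeta₀
  unfold chi
  fun_prop

lemma chi_one_sub (s : ℂ) : chi (1 - s) = chi s := by
  rw [chi, chi, completedRiemannZeta₀_one_sub]
  ring

lemma chi_zero : chi 0 = 1 := by simp [chi]

lemma chi_one : chi 1 = 1 := by simp [chi]

lemma chi_eq_mul_completedRiemannZeta {w : ℂ} (h0 : w ≠ 0) (h1 : w ≠ 1) :
    chi w = w * (w - 1) * completedRiemannZeta w := by
  have h1' : 1 - w ≠ 0 := sub_ne_zero.mpr h1.symm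
  rw [completedRiemannZeta_eq, chi]
  field_simp
  ring

lemma pi_cpow_ne_zero (w : ℂ) : (Real.pi : ℂ) ^ w ≠ 0 :=
  cpow_ne_zero_iff.mpr (.inl (ofReal_ne_zero.mpr Real.pi_ne_zero))

lemma Gamma_half_add_one_ne_zero {w : ℂ} (hw : -2 < w.re) : Gamma (w / 2 + 1) ≠ 0 :=
  Gamma_ne_zero_of_re_pos (by simp; linarith)

/-- The entire function `(w - 1) ζ(w)`. It is written through `chi`, so that its values at `0` and
`1` are the correct ones and its regularity is that of `chi` and of `1 / Γ`. -/
noncomputable def subOneMulZeta (w : ℂ) : ℂ :=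
  chi w * (Real.pi : ℂ) ^ (w / 2) / 2 * (Gamma (w / 2 + 1))⁻¹

lemma differentiable_subOneMulZeta : Differentiable ℂ subOneMulZeta := by
  have hchi := differentiable_chi
  have hGamma : Differentiable ℂ fun w : ℂ => (Gamma (w / 2 + 1))⁻¹ :=
    differentiable_one_div_Gamma.comp (by fun_prop)
  have hpi : Differentiable ℂ fun w : ℂ => (Real.pi : ℂ) ^ (w / 2) := fun w =>
    DifferentiableAt.const_cpow (by fun_prop) (.inl (ofReal_ne_zero.mpr Real.pi_ne_zero))
  unfold subOneMulZeta
  fun_prop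

lemma subOneMulZeta_eq {w : ℂ} (h0 : w ≠ 0) (h1 : w ≠ 1) :
    subOneMulZeta w = (w - 1) * riemannZeta w := by
  have hpi := pi_cpow_ne_zero (w / 2)
  rw [subOneMulZeta, riemannZeta_def_of_ne_zero h0, chi_eq_mul_completedRiemannZeta h0 h1,
    Gammaℝ_def, Gamma_add_one _ (div_ne_zero h0 two_ne_zero), neg_div, cpow_neg]
  by_cases hGamma : Gamma (w / 2) = 0
  · simp [hGamma]
  · field_simp

lemma chi_eq_mul_subOneMulZeta {w : ℂ} (hw : -2 < w.re) :
    chi w = 2 * (Real.pi : ℂ) ^ (-w / 2) * Gamma (w / 2 + 1) * subOneMulZeta w := by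
  have hGamma := Gamma_half_add_one_ne_zero hw
  have hpi := pi_cpow_ne_zero (w / 2)
  rw [subOneMulZeta, neg_div, cpow_neg]
  generalize Gamma (w / 2 + 1) = G at *
  field_simp

lemma subOneMulZeta_one : subOneMulZeta 1 = 1 := by
  have hpi := pi_cpow_ne_zero (1 / 2)
  rw [subOneMulZeta, chi_one, Gamma_add_one _ (by norm_num), Gamma_one_half_eq]
  field_simp

lemma subOneMulZeta_ne_zero {w : ℂ} (hw : 1 ≤ w.re) : subOneMulZeta w ≠ 0 := by
  by_cases h1 : w = 1
  · simp [h1, subOneMulZeta_one]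
  · have h0 : w ≠ 0 := by rintro rfl; norm_num at hw
    rw [subOneMulZeta_eq h0 h1]
    exact mul_ne_zero (sub_ne_zero.mpr h1) (riemannZeta_ne_zero_of_one_le_re hw)

lemma chi_ne_zero {w : ℂ} (hw : 1 ≤ w.re) : chi w ≠ 0 := by
  have hw' : -2 < w.re := by linarith
  simp [chi_eq_mul_subOneMulZeta hw', Gamma_half_add_one_ne_zero hw',
    subOneMulZeta_ne_zero hw]

lemma pi_cpow_conj (w : ℂ) : (Real.pi : ℂ) ^ conj w = conj ((Real.pi : ℂ) ^ w) := by
  have harg : (Real.pi : ℂ).arg ≠ Real.pi := by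
    simpa [arg_ofReal_of_nonneg Real.pi_pos.le] using Real.pi_ne_zero.symm
  rw [cpow_conj _ _ harg, conj_ofReal]

lemma chi_conj (s : ℂ) : chi (conj s) = conj (chi s) := by
  have key {w : ℂ} (hw : 1 / 2 ≤ w.re) : chi (conj w) = conj (chi w) := by
    have h0 : w ≠ 0 := by rintro rfl; norm_num at hw
    by_cases h1 : w = 1
    · simp [h1, chi_one]
    have h1' : conj w ≠ 1 := fun h => h1 (by simpa using congrArg conj h)
    have hpi : (Real.pi : ℂ) ^ (-conj w / 2) = conj ((Real.pi : ℂ) ^ (-w / 2)) := by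
      simp [← pi_cpow_conj, conj_ofNat]
    have hGamma : Gamma (conj w / 2 + 1) = conj (Gamma (w / 2 + 1)) := by
      simp [← Gamma_conj, conj_ofNat]
    rw [chi_eq_mul_subOneMulZeta (w := w) (by linarith),
      chi_eq_mul_subOneMulZeta (w := conj w) (by rw [conj_re]; linarith), subOneMulZeta_eq h0 h1,
      subOneMulZeta_eq (by simpa using h0) h1', riemannZeta_conj, hpi, hGamma]
    simp [conj_ofNat]
  rcases le_total (1 / 2) s.re with hs | hs
  · exact key hs
  · have := key (w := 1 - s) (by simp; linarith)
    rwa [map_sub, map_one, chi_one_sub, chi_one_sub] at this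

end Chi

section EulerMaclaurin

/-- The 1-periodic extension of the third Bernoulli polynomial `x (x - 1/2) (x - 1)`, the kernel of
the remainder in the third-order Euler–Maclaurin formula. -/
noncomputable def periodicBernoulliThree (x : ℝ) : ℝ :=
  Int.fract x * (Int.fract x - 1 / 2) * (Int.fract x - 1)

lemma abs_periodicBernoulliThree_le (x : ℝ) : |periodicBernoulliThree x| ≤ 1 / 20 := by
  have h0 := Int.fract_nonneg x
  have h1 := (Int.fract_lt_one x).le
  unfold periodicBernoulliThree
  refine abs_le_of_sq_le_sq ?_ (by norm_num)
  obtain ⟨v, hv⟩ : ∃ v, Int.fract x = v + 1 / 2 := ⟨Int.fract x - 1 / 2, by ring⟩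
  rw [hv] at h0 h1 ⊢
  have hv_sq : v ^ 2 ≤ 1 / 4 := by nlinarith
  calc ((v + 1 / 2) * (v + 1 / 2 - 1 / 2) * (v + 1 / 2 - 1)) ^ 2
      = 1 / 432 - (1 / 12 - v ^ 2) ^ 2 * (1 / 3 - v ^ 2) := by ring
    _ ≤ (1 / 20) ^ 2 := by
      nlinarith [mul_nonneg (sq_nonneg (1 / 12 - v ^ 2)) (by linarith : 0 ≤ 1 / 3 - v ^ 2)]

lemma norm_periodicBernoulliThree_le (x : ℝ) : ‖(periodicBernoulliThree x : ℂ)‖ ≤ 1 / 20 := by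
  simpa using abs_periodicBernoulliThree_le x

lemma measurable_periodicBernoulliThree : Measurable periodicBernoulliThree := by
  have := measurable_fract (R := ℝ)
  unfold periodicBernoulliThree
  fun_prop

lemma periodicBernoulliThree_eq {n : ℕ} {x : ℝ} (hx : x ∈ Icc (n : ℝ) (n + 1)) :
    periodicBernoulliThree x = (x - n) * (x - n - 1 / 2) * (x - n - 1) := by
  rcases eq_or_lt_of_le hx.2 with rfl | hlt
  · have : Int.fract ((n : ℝ) + 1) = 0 := by exact_mod_cast Int.fract_natCast (n + 1)
    simp [periodicBernoulliThree, this]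
  · have : Int.fract x = x - n :=
      Int.fract_eq_iff.mpr ⟨by linarith [hx.1], by linarith, n, by simp⟩
    rw [periodicBernoulliThree, this]

lemma integrable_mul_periodicBernoulliThree {μ : Measure ℝ} {f : ℝ → ℂ}
    (hf : Integrable f μ) : Integrable (fun x => f x * (periodicBernoulliThree x : ℂ)) μ :=
  hf.mul_bdd (measurable_ofReal.comp measurable_periodicBernoulliThree).aestronglyMeasurable
    (.of_forall norm_periodicBernoulliThree_le)

/-- The integral in the remainder of the third-order Euler–Maclaurin formula for `∑ n ^ (-w)`. -/
noncomputable def zetaRemainder (N : ℕ) (w : ℂ) : ℂ :=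
  ∫ x in Ioi (N : ℝ), (x : ℂ) ^ (-w - 3) * (periodicBernoulliThree x : ℂ)

/-- The boundary terms at `x` in the third-order Euler–Maclaurin formula for `∑ n ^ (-w)`. -/
noncomputable def zetaBoundary (w x : ℂ) : ℂ :=
  x ^ (1 - w) / (w - 1) + x ^ (-w) / 2 + w / 12 * x ^ (-w - 1)

variable {N : ℕ} {w : ℂ}

lemma integrableOn_zetaRemainder (hN : 1 ≤ N) (hw : -2 < w.re) :
    IntegrableOn (fun x : ℝ => (x : ℂ) ^ (-w - 3) * (periodicBernoulliThree x : ℂ))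
      (Ioi (N : ℝ)) :=
  integrable_mul_periodicBernoulliThree <|
    integrableOn_Ioi_cpow_of_lt (by simp; linarith) (by exact_mod_cast hN)

lemma norm_zetaRemainder_le (hN : 1 ≤ N) (hw : -2 < w.re) :
    ‖zetaRemainder N w‖ ≤ 1 / 20 * ((N : ℝ) ^ (-w.re - 2) / (w.re + 2)) := by
  have hN' : (0 : ℝ) < N := by exact_mod_cast hN
  have hexp : -w.re - 3 < -1 := by linarith
  have hvalue : ∫ x in Ioi (N : ℝ), 1 / 20 * x ^ (-w.re - 3) =
      1 / 20 * ((N : ℝ) ^ (-w.re - 2) / (w.re + 2)) := by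
    rw [integral_const_mul, integral_Ioi_rpow_of_lt hexp hN',
      show -w.re - 3 + 1 = -(w.re + 2) by ring, neg_div_neg_eq,
      show -w.re - 2 = -(w.re + 2) by ring]
  rw [← hvalue]
  refine norm_integral_le_of_norm_le ((integrableOn_Ioi_rpow_of_lt hexp hN').const_mul _)
    ((ae_restrict_iff' measurableSet_Ioi).mpr (.of_forall fun x hx => ?_))
  have hx0 : 0 < x := hN'.trans hx
  rw [norm_mul, norm_cpow_eq_rpow_re_of_pos hx0, mul_comm, show (-w - 3).re = -w.re - 3 by simp]
  gcongr
  exact norm_periodicBernoulliThree_le x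

lemma zetaRemainder_eq_mellin (N : ℕ) (w : ℂ) :
    zetaRemainder N w =
      mellin ((Ioi (N : ℝ)).indicator fun x => (periodicBernoulliThree x : ℂ)) (-w - 2) := by
  have hintegrand (x : ℝ) :
      (x : ℂ) ^ (-w - 2 - 1) • (Ioi (N : ℝ)).indicator
          (fun x => (periodicBernoulliThree x : ℂ)) x =
        (Ioi (N : ℝ)).indicator
          (fun x : ℝ => (x : ℂ) ^ (-w - 3) * (periodicBernoulliThree x : ℂ)) x := by
    rw [show -w - 2 - 1 = -w - 3 by ring]
    by_cases hx : x ∈ Ioi (N : ℝ) <;> simp [hx]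
  simp_rw [zetaRemainder, mellin, hintegrand]
  rw [setIntegral_indicator measurableSet_Ioi, Ioi_inter_Ioi, max_eq_right (Nat.cast_nonneg N)]

lemma differentiableAt_zetaRemainder (hN : 1 ≤ N) (hw : -2 < w.re) :
    DifferentiableAt ℂ (zetaRemainder N) w := by
  have hN' : (0 : ℝ) < N := by exact_mod_cast hN
  set f : ℝ → ℂ := (Ioi (N : ℝ)).indicator fun x => (periodicBernoulliThree x : ℂ)
  have hf_le (x : ℝ) : ‖f x‖ ≤ 1 / 20 :=
    (norm_indicator_le_norm_self _ _).trans (norm_periodicBernoulliThree_le x)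
  have hf_meas : Measurable f :=
    (measurable_ofReal.comp measurable_periodicBernoulliThree).indicator measurableSet_Ioi
  have hf_zero : f =ᶠ[𝓝[>] 0] fun _ => 0 := by
    filter_upwards [nhdsWithin_le_nhds (Iio_mem_nhds hN')] with x hx
    exact indicator_of_notMem (by simpa using hx.le) _
  have hmellin : DifferentiableAt ℂ (mellin f) (-w - 2) := by
    refine mellin_differentiableAt_of_isBigO_rpow (a := 0) (b := -w.re - 3) ?_ ?_
      (by simp; linarith) ?_ (by simp; norm_num)
    · exact ((locallyIntegrable_const (1 / 20 : ℝ)).mono hf_meas.aestronglyMeasurable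
        (.of_forall fun x => (hf_le x).trans (le_abs_self _))).locallyIntegrableOn _
    · exact .of_bound (1 / 20) (.of_forall fun x => by simpa using hf_le x)
    · exact (isBigO_zero _ _).congr' hf_zero.symm .rfl
  rw [show zetaRemainder N = fun w => mellin f (-w - 2) from
    funext (zetaRemainder_eq_mellin N)]
  exact hmellin.comp (f := fun w : ℂ => -w - 2) w (by fun_prop)

lemma hasDerivAt_ofReal_cpow {x : ℝ} (hx : 0 < x) (c : ℂ) :
    HasDerivAt (fun y : ℝ => (y : ℂ) ^ c) (c * (x : ℂ) ^ (c - 1)) x := by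
  simpa using ((hasDerivAt_id (x : ℂ)).cpow_const (c := c) (.inl (by simpa using hx))).comp_ofReal

/-- The result of integrating the remainder kernel by parts three times on `[a, a + 1]`. -/
noncomputable def zetaPrimitive (a w : ℂ) (x : ℝ) : ℂ :=
  -(w * (w + 1) / 6) * ((x - a) * (x - a - 1 / 2) * (x - a - 1)) * (x : ℂ) ^ (-w - 2)
    - w / 2 * ((x - a) ^ 2 - (x - a) + 1 / 6) * (x : ℂ) ^ (-w - 1)
    - (x - a - 1 / 2) * (x : ℂ) ^ (-w) - (x : ℂ) ^ (1 - w) / (w - 1)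

lemma hasDerivAt_zetaPrimitive (a : ℂ) (hw : w ≠ 1) {x : ℝ} (hx : 0 < x) :
    HasDerivAt (zetaPrimitive a w)
      (w * (w + 1) * (w + 2) / 6 *
        ((x : ℂ) ^ (-w - 3) * ((x - a) * (x - a - 1 / 2) * (x - a - 1)))) x := by
  have hxc : (x : ℂ) ≠ 0 := by exact_mod_cast hx.ne'
  have hu : HasDerivAt (fun y : ℝ => (y : ℂ) - a) 1 x :=
    (hasDerivAt_id x).ofReal_comp.sub_const a
  have hb3 := (hu.fun_mul (hu.sub_const (1 / 2))).fun_mul (hu.sub_const 1)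
  have hb2 := ((hu.fun_pow 2).fun_sub hu).add_const (1 / 6 : ℂ)
  have hb1 := hu.sub_const (1 / 2)
  have hprimitive := ((((hb3.const_mul (-(w * (w + 1) / 6))).fun_mul
    (hasDerivAt_ofReal_cpow hx (-w - 2))).fun_sub
    ((hb2.const_mul (w / 2)).fun_mul (hasDerivAt_ofReal_cpow hx (-w - 1)))).fun_sub
    (hb1.fun_mul (hasDerivAt_ofReal_cpow hx (-w)))).fun_sub
    ((hasDerivAt_ofReal_cpow hx (1 - w)).div_const (w - 1))
  convert! hprimitive using 1
  have hcancel : (1 - w) * (x : ℂ) ^ (1 - w - 1) / (w - 1) = -(x : ℂ) ^ (1 - w - 1) := by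
    have := sub_ne_zero.mpr hw
    field_simp
    ring
  rw [hcancel, show -w - 2 - 1 = -w - 3 by ring, show -w - 2 = -w - 3 + 1 by ring,
    show -w - 1 - 1 = -w - 3 + 1 by ring, show -w - 1 = -w - 3 + 1 + 1 by ring,
    show 1 - w - 1 = -w - 3 + 1 + 1 + 1 by ring, show (x : ℂ) ^ (-w) = x ^ (-w - 3 + 1 + 1 + 1) by
      ring_nf]
  simp only [cpow_add _ _ hxc, cpow_one]
  generalize (x : ℂ) ^ (-w - 3) = y
  push_cast
  ring

lemma continuousOn_ofReal_cpow_Icc {a b : ℝ} (ha : 0 < a) (c : ℂ) :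
    ContinuousOn (fun x : ℝ => (x : ℂ) ^ c) (Icc a b) := fun _ hx =>
  (hasDerivAt_ofReal_cpow (ha.trans_le hx.1) c).continuousAt.continuousWithinAt

lemma integral_zetaRemainder_natCast_succ {n : ℕ} (hn : 1 ≤ n) (hw : w ≠ 1) :
    w * (w + 1) * (w + 2) / 6 *
        ∫ x in (n : ℝ)..(n + 1 : ℝ), (x : ℂ) ^ (-w - 3) * (periodicBernoulliThree x : ℂ) =
      zetaBoundary w n - zetaBoundary w (n + 1) - (n : ℂ) ^ (-w) := by
  have hn' : (0 : ℝ) < n := by exact_mod_cast hn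
  have hIcc : [[(n : ℝ), n + 1]] = Icc (n : ℝ) (n + 1) := uIcc_of_le (by linarith)
  have hkernel :
      ∫ x in (n : ℝ)..(n + 1 : ℝ), (x : ℂ) ^ (-w - 3) * (periodicBernoulliThree x : ℂ) =
      ∫ x in (n : ℝ)..(n + 1 : ℝ),
        (x : ℂ) ^ (-w - 3) * ((x - n) * (x - n - 1 / 2) * (x - n - 1)) := by
    refine intervalIntegral.integral_congr fun x hx => ?_
    simp only [periodicBernoulliThree_eq (hIcc ▸ hx)]
    push_cast
    rfl
  have hcont : ContinuousOn (fun x : ℝ => w * (w + 1) * (w + 2) / 6 *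
      ((x : ℂ) ^ (-w - 3) * ((x - n) * (x - n - 1 / 2) * (x - n - 1)))) [[(n : ℝ), n + 1]] := by
    have := continuousOn_ofReal_cpow_Icc (b := n + 1) hn' (-w - 3)
    rw [hIcc]
    fun_prop
  rw [hkernel, ← intervalIntegral.integral_const_mul,
    intervalIntegral.integral_eq_sub_of_hasDerivAt (f := zetaPrimitive n w) (fun x hx =>
      hasDerivAt_zetaPrimitive n hw (hn'.trans_le (hIcc ▸ hx).1)) hcont.intervalIntegrable]
  simp only [zetaPrimitive, zetaBoundary]
  push_cast
  ring

lemma intervalIntegrable_zetaRemainder {a b : ℝ} (ha : 0 < a) (hab : a ≤ b) (w : ℂ) :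
    IntervalIntegrable (fun x : ℝ => (x : ℂ) ^ (-w - 3) * (periodicBernoulliThree x : ℂ))
      volume a b := by
  have hcpow : IntervalIntegrable (fun x : ℝ => (x : ℂ) ^ (-w - 3)) volume a b :=
    ((continuousOn_ofReal_cpow_Icc ha _).mono (uIcc_of_le hab).subset).intervalIntegrable
  rw [intervalIntegrable_iff] at hcpow ⊢
  exact integrable_mul_periodicBernoulliThree hcpow

lemma integral_zetaRemainder_natCast {M : ℕ} (hN : 1 ≤ N) (hNM : N ≤ M) (hw : w ≠ 1) :
    w * (w + 1) * (w + 2) / 6 *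
        ∫ x in (N : ℝ)..(M : ℝ), (x : ℂ) ^ (-w - 3) * (periodicBernoulliThree x : ℂ) =
      zetaBoundary w N - zetaBoundary w M - ∑ n ∈ Finset.Ico N M, (n : ℂ) ^ (-w) := by
  induction M, hNM using Nat.le_induction with
  | base => simp
  | succ M hNM ih =>
    have hN' : (0 : ℝ) < N := by exact_mod_cast hN
    have hNM' : (N : ℝ) ≤ M := by exact_mod_cast hNM
    push_cast
    rw [← intervalIntegral.integral_add_adjacent_intervals
      (intervalIntegrable_zetaRemainder hN' hNM' w)
      (intervalIntegrable_zetaRemainder (hN'.trans_le hNM') (by linarith) w),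
      mul_add, ih, Finset.sum_Ico_succ_top hNM,
      integral_zetaRemainder_natCast_succ (hN.trans hNM) hw]
    ring

lemma tendsto_natCast_cpow_zero {c : ℂ} (hc : c.re < 0) :
    Tendsto (fun M : ℕ => (M : ℂ) ^ c) atTop (𝓝 0) := by
  rw [tendsto_zero_iff_norm_tendsto_zero]
  have hreal : Tendsto (fun M : ℕ => (M : ℝ) ^ (-(-c.re))) atTop (𝓝 0) :=
    (tendsto_rpow_neg_atTop (by linarith : 0 < -c.re)).comp tendsto_natCast_atTop_atTop
  refine hreal.congr' ?_
  filter_upwards [eventually_gt_atTop 0] with M hM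
  rw [norm_natCast_cpow_of_pos hM, neg_neg]

lemma tendsto_zetaBoundary_zero (hw : 1 < w.re) :
    Tendsto (fun M : ℕ => zetaBoundary w M) atTop (𝓝 0) := by
  have h1 := tendsto_natCast_cpow_zero (c := 1 - w) (by simp; linarith)
  have h2 := tendsto_natCast_cpow_zero (c := -w) (by simp; linarith)
  have h3 := tendsto_natCast_cpow_zero (c := -w - 1) (by simp; linarith)
  simpa [zetaBoundary] using
    ((h1.div_const (w - 1)).add (h2.div_const 2)).add (h3.const_mul (w / 12))

lemma tendsto_sum_Ico_cpow_riemannZeta (hw : 1 < w.re) :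
    Tendsto (fun M : ℕ => ∑ n ∈ Finset.Ico 1 M, (n : ℂ) ^ (-w)) atTop (𝓝 (riemannZeta w)) := by
  have hw0 : w ≠ 0 := by rintro rfl; norm_num at hw
  have hsum := (summable_one_div_nat_cpow.mpr hw).hasSum.tendsto_sum_nat
  rw [← zeta_eq_tsum_one_div_nat_cpow hw] at hsum
  refine hsum.congr fun M => ?_
  rcases M.eq_zero_or_pos with rfl | hM
  · simp
  · rw [Finset.range_eq_Ico, Finset.sum_eq_sum_Ico_succ_bot hM]
    simp [hw0, cpow_neg]

lemma riemannZeta_eq_sum_add_zetaBoundary_sub_zetaRemainder (hN : 1 ≤ N) (hw : 1 < w.re) :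
    riemannZeta w = ∑ n ∈ Finset.Ico 1 N, (n : ℂ) ^ (-w) + zetaBoundary w N
      - w * (w + 1) * (w + 2) / 6 * zetaRemainder N w := by
  have hw1 : w ≠ 1 := by rintro rfl; norm_num at hw
  have hremainder : Tendsto (fun M : ℕ => w * (w + 1) * (w + 2) / 6 *
        ∫ x in (N : ℝ)..(M : ℝ), (x : ℂ) ^ (-w - 3) * (periodicBernoulliThree x : ℂ))
      atTop (𝓝 (w * (w + 1) * (w + 2) / 6 * zetaRemainder N w)) :=
    (intervalIntegral_tendsto_integral_Ioi _ (integrableOn_zetaRemainder hN (by linarith))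
      tendsto_natCast_atTop_atTop).const_mul _
  have hlimit := ((tendsto_zetaBoundary_zero hw).const_sub (zetaBoundary w N)).sub
    ((tendsto_sum_Ico_cpow_riemannZeta hw).sub_const (∑ n ∈ Finset.Ico 1 N, (n : ℂ) ^ (-w)))
  have heq := tendsto_nhds_unique (hremainder.congr' (by
    filter_upwards [eventually_ge_atTop N] with M hM
    rw [integral_zetaRemainder_natCast hN hM hw1, ← Finset.sum_Ico_consecutive _ hN hM]
    ring)) hlimit
  rw [heq]
  ring

/-- The third-order Euler–Maclaurin approximation to `(w - 1) ζ(w)`. -/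
noncomputable def subOneMulZetaApprox (N : ℕ) (w : ℂ) : ℂ :=
  (w - 1) * ∑ n ∈ Finset.Ico 1 N, (n : ℂ) ^ (-w) + (N : ℂ) ^ (1 - w) +
    (w - 1) * (N : ℂ) ^ (-w) / 2 + (w - 1) * w / 12 * (N : ℂ) ^ (-w - 1)

lemma differentiable_subOneMulZetaApprox (hN : 1 ≤ N) :
    Differentiable ℂ (subOneMulZetaApprox N) := by
  have hcpow {n : ℕ} (hn : 1 ≤ n) {g : ℂ → ℂ} (hg : Differentiable ℂ g) :
      Differentiable ℂ fun w => (n : ℂ) ^ g w := fun w =>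
    (hg w).const_cpow (.inl (by exact_mod_cast (by lia : n ≠ 0)))
  have hsum : Differentiable ℂ fun w : ℂ => ∑ n ∈ Finset.Ico 1 N, (n : ℂ) ^ (-w) :=
    .fun_sum fun n hn => hcpow (Finset.mem_Ico.mp hn).1 (by fun_prop)
  have := hcpow hN (g := fun w => 1 - w) (by fun_prop)
  have := hcpow hN (g := fun w => -w) (by fun_prop)
  have := hcpow hN (g := fun w => -w - 1) (by fun_prop)
  unfold subOneMulZetaApprox
  fun_prop

lemma subOneMulZeta_eq_approx_sub (hN : 1 ≤ N) (hw : -2 < w.re) :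
    subOneMulZeta w = subOneMulZetaApprox N w
      - (w - 1) * w * (w + 1) * (w + 2) / 6 * zetaRemainder N w := by
  have hU : IsOpen {w : ℂ | -2 < w.re} := isOpen_lt continuous_const continuous_re
  have hright : DifferentiableOn ℂ (fun w => subOneMulZetaApprox N w
      - (w - 1) * w * (w + 1) * (w + 2) / 6 * zetaRemainder N w) {w | -2 < w.re} := by
    intro w hw
    have hremainder := differentiableAt_zetaRemainder hN hw
    have happrox := differentiable_subOneMulZetaApprox hN
    exact DifferentiableAt.differentiableWithinAt (by fun_prop)
  have heventually : subOneMulZeta =ᶠ[𝓝 2] fun w => subOneMulZetaApprox N w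
      - (w - 1) * w * (w + 1) * (w + 2) / 6 * zetaRemainder N w := by
    filter_upwards [(isOpen_lt continuous_const continuous_re).mem_nhds
      (show 1 < (2 : ℂ).re by norm_num)] with z (hz : 1 < z.re)
    have h0 : z ≠ 0 := by rintro rfl; norm_num at hz
    have h1 : z ≠ 1 := by rintro rfl; norm_num at hz
    have h1' := sub_ne_zero.mpr h1
    rw [subOneMulZeta_eq h0 h1, riemannZeta_eq_sum_add_zetaBoundary_sub_zetaRemainder hN hz,
      zetaBoundary, subOneMulZetaApprox]
    field_simp
    ring
  have hleft := differentiable_subOneMulZeta.differentiableOn (s := {w : ℂ | -2 < w.re})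
  exact (hleft.analyticOnNhd hU).eqOn_of_preconnected_of_eventuallyEq (hright.analyticOnNhd hU)
    (convex_halfSpace_re_gt _).isPreconnected (by simp) heventually hw

lemma norm_subOneMulZeta_sub_approx_le (hN : 1 ≤ N) (hw : -2 < w.re) :
    ‖subOneMulZeta w - subOneMulZetaApprox N w‖ ≤
      ‖(w - 1) * (w * (w + 1) * (w + 2))‖ * ((N : ℝ) ^ (-w.re - 2) / (120 * (w.re + 2))) := by
  have hsplit : subOneMulZeta w - subOneMulZetaApprox N w =
      -((w - 1) * (w * (w + 1) * (w + 2)) / 6 * zetaRemainder N w) := by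
    rw [subOneMulZeta_eq_approx_sub hN hw]
    ring
  have hpos : w.re + 2 ≠ 0 := by linarith
  rw [hsplit, norm_neg, norm_mul, norm_div, RCLike.norm_ofNat]
  calc _ ≤ ‖(w - 1) * (w * (w + 1) * (w + 2))‖ / 6 *
        (1 / 20 * ((N : ℝ) ^ (-w.re - 2) / (w.re + 2))) := by
        gcongr
        exact norm_zetaRemainder_le hN hw
    _ = _ := by
        field_simp
        ring

end EulerMaclaurin

section ShiftInequality

lemma one_add_pow_le_mul_exp {δ r : ℝ} (hδ : 0 < δ) (hr : 0 ≤ r) (k : ℕ) :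
    (1 + r) ^ k ≤ k.factorial / δ ^ k * Real.exp (δ * (1 + r)) := by
  have hexp := Real.pow_div_factorial_le_exp (δ * (1 + r)) (by positivity) k
  rw [div_le_iff₀ (by positivity), mul_pow] at hexp
  rw [div_mul_eq_mul_div, le_div_iff₀ (by positivity)]
  linarith

-- Polynomial growth allows exponential damping along the real direction, after which the
-- Phragmén–Lindelöf principle for bounded functions applies.
lemma norm_le_of_norm_le_on_imaginary_axis {f : ℂ → ℂ} {C M : ℝ} {k : ℕ}
    (hf : DiffContOnCl ℂ f {z | 0 < z.re})
    (hgrowth : ∀ z : ℂ, 0 < z.re → ‖f z‖ ≤ M * (1 + ‖z‖) ^ k)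
    (hline : ∀ y : ℝ, ‖f (y * I)‖ ≤ C) {z : ℂ} (hz : 0 ≤ z.re) : ‖f z‖ ≤ C := by
  have hM : 0 ≤ M := by
    refine nonneg_of_mul_nonneg_left ((norm_nonneg _).trans (hgrowth 1 (by simp))) ?_
    positivity
  suffices ∀ᶠ δ : ℝ in 𝓝[>] 0, ‖exp (-δ * z) * f z‖ ≤ C by
    refine le_of_tendsto (Tendsto.mono_left ?_ nhdsWithin_le_nhds) this
    exact Continuous.tendsto' (by fun_prop) _ _ (by simp)
  filter_upwards [self_mem_nhdsWithin] with δ (hδ : 0 < δ)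
  have hdamp (z : ℂ) : ‖exp (-δ * z)‖ = Real.exp (-(δ * z.re)) := by simp [norm_exp]
  have hgrowth' {z : ℂ} (hz : 0 < z.re) {ε : ℝ} (hε : 0 < ε) :
      ‖exp (-δ * z) * f z‖ ≤ Real.exp (-(δ * z.re)) *
        (M * (k.factorial / ε ^ k * Real.exp (ε * (1 + ‖z‖)))) := by
    rw [norm_mul, hdamp]
    gcongr
    exact (hgrowth z hz).trans (by gcongr; exact one_add_pow_le_mul_exp hε (norm_nonneg z) k)
  refine PhragmenLindelof.right_half_plane_of_bounded_on_real
    (f := fun z => exp (-δ * z) * f z) ?_ ⟨1, by norm_num, 1, ?_⟩ ?_ (fun y => ?_) hz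
  · exact ((by fun_prop : Differentiable ℂ fun z : ℂ => exp (-δ * z)).diffContOnCl).smul hf
  · refine .of_bound (M * (k.factorial * Real.exp 1)) ?_
    filter_upwards [mem_inf_of_right (mem_principal_self _)] with z (hz : 0 < z.re)
    calc ‖exp (-δ * z) * f z‖
        ≤ 1 * (M * (k.factorial / 1 ^ k * Real.exp (1 * (1 + ‖z‖)))) :=
          (hgrowth' hz one_pos).trans (by gcongr; exact Real.exp_le_one_iff.mpr (by nlinarith))
      _ = M * (k.factorial * Real.exp 1) * ‖Real.exp (1 * ‖z‖ ^ (1 : ℝ))‖ := by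
          simp [Real.exp_add]; ring
  · refine isBoundedUnder_of_eventually_le (a := M * (k.factorial / δ ^ k * Real.exp δ)) ?_
    filter_upwards [eventually_gt_atTop 0] with x hx
    refine (hgrowth' (z := x) (by simpa using hx) hδ).trans_eq ?_
    rw [norm_real, Real.norm_of_nonneg hx.le, ofReal_re, mul_add, mul_one, Real.exp_add,
      Real.exp_neg]
    field_simp
  · rw [norm_mul, hdamp]
    simpa using hline y

lemma norm_le_of_norm_le_on_line {f : ℂ → ℂ} {σ C M : ℝ} {k : ℕ}
    (hf : ∀ z : ℂ, σ ≤ z.re → DifferentiableAt ℂ f z)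
    (hgrowth : ∀ z : ℂ, σ < z.re → ‖f z‖ ≤ M * (1 + ‖z‖) ^ k)
    (hline : ∀ z : ℂ, z.re = σ → ‖f z‖ ≤ C) {z : ℂ} (hz : σ ≤ z.re) : ‖f z‖ ≤ C := by
  have hM : 0 ≤ M := by
    refine nonneg_of_mul_nonneg_left
      ((norm_nonneg _).trans (hgrowth (σ + 1 : ℝ) (by simp))) ?_
    positivity
  have hdiff : DiffContOnCl ℂ (fun z => f (σ + z)) {z | 0 < z.re} := by
    refine DifferentiableOn.diffContOnCl fun z hz => DifferentiableAt.differentiableWithinAt ?_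
    rw [closure_setOfPred_lt_re] at hz
    exact (hf (σ + z) (by simpa using hz)).comp z (by fun_prop)
  have hgrowth' (z : ℂ) (hz : 0 < z.re) :
      ‖f (σ + z)‖ ≤ M * (1 + |σ|) ^ k * (1 + ‖z‖) ^ k := by
    refine (hgrowth _ (by simpa using hz)).trans ?_
    rw [mul_assoc, ← mul_pow]
    have hnorm : ‖(σ : ℂ) + z‖ ≤ |σ| + ‖z‖ := (norm_add_le _ _).trans (by simp)
    gcongr
    nlinarith [mul_nonneg (abs_nonneg σ) (norm_nonneg z)]
  simpa using norm_le_of_norm_le_on_imaginary_axis hdiff hgrowth'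
    (fun y => hline _ (by simp)) (z := z - σ) (by simpa using hz)

lemma exists_norm_subOneMulZeta_le :
    ∃ M, ∀ w : ℂ, -3 / 2 ≤ w.re → ‖subOneMulZeta w‖ ≤ M * (1 + ‖w‖) ^ 4 := by
  refine ⟨4, fun w hw => ?_⟩
  have hremainder := norm_subOneMulZeta_sub_approx_le (N := 1) (w := w) le_rfl (by linarith)
  have hconst : ((1 : ℕ) : ℝ) ^ (-w.re - 2) / (120 * (w.re + 2)) ≤ 1 := by
    rw [Nat.cast_one, Real.one_rpow, div_le_one (by linarith)]
    linarith
  set r := 1 + ‖w‖ with hr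
  have hr1 : 1 ≤ r := by simp [hr]
  have h0 : ‖w‖ ≤ r := by simp [hr]
  have h1 : ‖w - 1‖ ≤ r := (norm_sub_le _ _).trans (by simp [hr, add_comm])
  have h2 : ‖w + 1‖ ≤ r := (norm_add_le _ _).trans (by simp [hr, add_comm])
  have h3 : ‖w + 2‖ ≤ 2 * r := (norm_add_le _ _).trans (by simp; linarith)
  have happrox : ‖subOneMulZetaApprox 1 w‖ ≤ 2 * r ^ 4 := by
    have hexpand : subOneMulZetaApprox 1 w = 1 + ((w - 1) / 2 + (w - 1) * w / 12) := by
      simp [subOneMulZetaApprox]; ring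
    calc ‖subOneMulZetaApprox 1 w‖ ≤ ‖(1 : ℂ)‖ + (‖(w - 1) / 2‖ + ‖(w - 1) * w / 12‖) :=
          hexpand ▸ (norm_add_le _ _).trans (by gcongr; exact norm_add_le _ _)
      _ ≤ 1 + (r / 2 + r * r / 12) := by
          rw [norm_one, norm_div, norm_div, norm_mul, RCLike.norm_ofNat, RCLike.norm_ofNat]
          gcongr
      _ ≤ 2 * r ^ 4 := by
          have hpow1 := pow_le_pow_right₀ hr1 (show 1 ≤ 4 by norm_num)
          have hpow2 := pow_le_pow_right₀ hr1 (show 2 ≤ 4 by norm_num)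
          nlinarith
  calc ‖subOneMulZeta w‖ ≤ ‖subOneMulZetaApprox 1 w‖ +
        ‖subOneMulZeta w - subOneMulZetaApprox 1 w‖ := norm_le_norm_add_norm_sub' _ _
    _ ≤ 2 * r ^ 4 + r * (r * r * (2 * r)) * 1 := by
        refine add_le_add happrox (hremainder.trans ?_)
        rw [norm_mul, norm_mul, norm_mul]
        have : 0 < w.re + 2 := by linarith
        gcongr
    _ = 4 * r ^ 4 := by ring

lemma exists_norm_inv_subOneMulZeta_le {σ : ℝ} (hσ : 1 < σ) :
    ∃ C, ∀ w : ℂ, σ ≤ w.re → ‖(subOneMulZeta w)⁻¹‖ ≤ C := by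
  have hsummable : LSeriesSummable (fun n => (ArithmeticFunction.moebius n : ℂ)) σ :=
    ArithmeticFunction.LSeriesSummable_moebius_iff.mpr (by simpa using hσ)
  refine ⟨(σ - 1)⁻¹ * ∑' n, ‖LSeries.term (fun n => (ArithmeticFunction.moebius n : ℂ)) σ n‖,
    fun w hw => ?_⟩
  have hw1 : 1 < w.re := hσ.trans_le hw
  have hzeta := ArithmeticFunction.LSeries_zeta_mul_Lseries_moebius hw1
  rw [ArithmeticFunction.LSeries_zeta_eq_riemannZeta hw1] at hzeta
  have h0 : w ≠ 0 := by rintro rfl; norm_num at hw1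
  have h1 : w ≠ 1 := by rintro rfl; norm_num at hw1
  have hre : σ - 1 ≤ ‖w - 1‖ := le_trans (by simpa using hw) (re_le_norm _)
  have : 0 < σ - 1 := sub_pos.mpr hσ
  rw [subOneMulZeta_eq h0 h1, mul_inv, norm_mul, norm_inv, inv_eq_of_mul_eq_one_right hzeta]
  gcongr
  exact tsum_of_norm_bounded hsummable.norm.hasSum fun n =>
    LSeries.norm_term_le_of_re_le_re _ (by simpa using hw) n

lemma norm_betaIntegral_le {x a : ℝ} (hx : 0 < x) (ha : 0 < a) {z : ℂ} (hz : x ≤ z.re) :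
    ‖betaIntegral z a‖ ≤
      ∫ t in (0 : ℝ)..1, ‖(t : ℂ) ^ ((x : ℂ) - 1) * (1 - t : ℂ) ^ ((a : ℂ) - 1)‖ := by
  refine intervalIntegral.norm_integral_le_of_norm_le zero_le_one ?_
    (betaIntegral_convergent (by simpa using hx) (by simpa using ha)).norm
  filter_upwards with t ht
  rw [norm_mul, norm_mul, norm_cpow_eq_rpow_re_of_pos ht.1, norm_cpow_eq_rpow_re_of_pos ht.1]
  gcongr ?_ * _
  exact Real.rpow_le_rpow_of_exponent_ge ht.1 ht.2 (by simpa using hz)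

lemma exists_norm_Gamma_div_Gamma_le {x a : ℝ} (hx : 0 < x) (ha : 0 < a) :
    ∃ C, ∀ z : ℂ, x ≤ z.re → ‖Gamma z / Gamma (z + a)‖ ≤ C := by
  have hGamma : Gamma a ≠ 0 := Gamma_ne_zero_of_re_pos (by simpa using ha)
  refine ⟨(∫ t in (0 : ℝ)..1, ‖(t : ℂ) ^ ((x : ℂ) - 1) * (1 - t : ℂ) ^ ((a : ℂ) - 1)‖) /
    ‖Gamma a‖, fun z hz => ?_⟩
  have hGamma' : Gamma (z + a) ≠ 0 := Gamma_ne_zero_of_re_pos (by simp; linarith)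
  have hbeta := Gamma_mul_Gamma_eq_betaIntegral (hx.trans_le hz) (t := a) (by simpa using ha)
  have : Gamma z / Gamma (z + a) = betaIntegral z a / Gamma a := by
    rw [div_eq_div_iff hGamma' hGamma, hbeta]; ring
  rw [this, norm_div]
  gcongr
  exact norm_betaIntegral_le hx ha hz

variable {a : ℝ}

lemma chi_div_chi_eq {s : ℂ} (hs : a - 2 < s.re) (hs' : -a - 2 < s.re) :
    chi (s - a) / chi (s + a) = (Real.pi : ℂ) ^ (a : ℂ) *
      (Gamma ((s - a) / 2 + 1) / Gamma ((s - a) / 2 + 1 + a)) * subOneMulZeta (s - a) *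
        (subOneMulZeta (s + a))⁻¹ := by
  have hpi : (Real.pi : ℂ) ≠ 0 := ofReal_ne_zero.mpr Real.pi_ne_zero
  rw [chi_eq_mul_subOneMulZeta (w := s - a) (by simp; linarith),
    chi_eq_mul_subOneMulZeta (w := s + a) (by simp; linarith),
    show (s - a) / 2 + 1 + a = (s + a) / 2 + 1 by ring,
    show -(s - a) / 2 = a + -(s + a) / 2 by ring, cpow_add _ _ hpi]
  have := pi_cpow_ne_zero (-(s + a) / 2)
  field_simp

lemma exists_norm_chi_sub_div_chi_add_le (ha : 1 / 2 < a) (ha' : a ≤ 2) :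
    ∃ K, ∀ s : ℂ, 1 / 2 < s.re → ‖chi (s - a) / chi (s + a)‖ ≤ K * (1 + ‖s‖) ^ 4 := by
  obtain ⟨M, hM⟩ := exists_norm_subOneMulZeta_le
  obtain ⟨C, hC⟩ := exists_norm_inv_subOneMulZeta_le (σ := 1 / 2 + a) (by linarith)
  obtain ⟨B, hB⟩ := exists_norm_Gamma_div_Gamma_le (x := 1 / 4) (a := a) (by norm_num)
    (by linarith)
  refine ⟨Real.pi ^ a * B * (M * 3 ^ 4) * C, fun s hs => ?_⟩
  have hM0 : 0 ≤ M := by simpa using (norm_nonneg _).trans (hM 0 (by norm_num))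
  have hnorm : 1 + ‖s - a‖ ≤ 3 * (1 + ‖s‖) := by
    have := norm_sub_le s a
    rw [norm_real, Real.norm_of_nonneg (by linarith)] at this
    linarith [norm_nonneg s]
  have hGamma := hB ((s - a) / 2 + 1) (by simp; linarith)
  have hzeta : ‖subOneMulZeta (s - a)‖ ≤ M * (3 * (1 + ‖s‖)) ^ 4 :=
    (hM (s - a) (by simp; linarith)).trans (by gcongr)
  have hinv := hC (s + a) (by simp; linarith)
  have hB0 := (norm_nonneg _).trans hGamma
  rw [chi_div_chi_eq (by linarith) (by linarith), norm_mul, norm_mul, norm_mul,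
    norm_cpow_eq_rpow_re_of_pos Real.pi_pos, ofReal_re]
  calc _ ≤ Real.pi ^ a * B * (M * (3 * (1 + ‖s‖)) ^ 4) * C := by gcongr
    _ = _ := by ring

lemma norm_chi_sub_div_chi_add_le_one (ha : 1 / 2 < a) (ha' : a ≤ 2) {s : ℂ}
    (hs : 1 / 2 ≤ s.re) : ‖chi (s - a) / chi (s + a)‖ ≤ 1 := by
  have hne {z : ℂ} (hz : 1 / 2 ≤ z.re) : chi (z + a) ≠ 0 := chi_ne_zero (by simp; linarith)
  obtain ⟨K, hK⟩ := exists_norm_chi_sub_div_chi_add_le ha ha'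
  refine norm_le_of_norm_le_on_line (f := fun s => chi (s - a) / chi (s + a)) (fun z hz => ?_) hK
    (fun z hz => ?_) hs
  · have := differentiable_chi
    exact DifferentiableAt.div (by fun_prop) (by fun_prop) (hne hz)
  · have hreflect : chi (z - a) = conj (chi (z + a)) := by
      rw [← chi_one_sub, ← chi_conj]
      congr 1
      apply Complex.ext <;> simp [hz]
      ring
    rw [hreflect, norm_div, RCLike.norm_conj, div_self (norm_ne_zero_iff.mpr (hne hz.ge))]

theorem norm_chi_sub_le_norm_chi_add (ha : 1 / 2 ≤ a) (ha' : a ≤ 2) {s : ℂ}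
    (hs : 1 / 2 ≤ s.re) : ‖chi (s - a)‖ ≤ ‖chi (s + a)‖ := by
  have hstrict {b : ℝ} (hb : b ∈ Ioc (1 / 2) 2) : ‖chi (s - b)‖ ≤ ‖chi (s + b)‖ := by
    have hne : chi (s + b) ≠ 0 := chi_ne_zero (by simp; linarith [hb.1])
    have := norm_chi_sub_div_chi_add_le_one hb.1 hb.2 hs
    rwa [norm_div, div_le_one (norm_pos_iff.mpr hne)] at this
  have hchi := differentiable_chi.continuous
  have hclosed : IsClosed {b : ℝ | ‖chi (s - b)‖ ≤ ‖chi (s + b)‖} :=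
    isClosed_le (by fun_prop) (by fun_prop)
  refine hclosed.closure_subset_iff.mpr (fun b hb => hstrict hb) ?_
  rw [closure_Ioc (by norm_num)]
  exact ⟨ha, ha'⟩

end ShiftInequality

section Factorization

lemma differentiable_dslope {f : ℂ → ℂ} (hf : Differentiable ℂ f) (c : ℂ) :
    Differentiable ℂ (dslope f c) := by
  rw [← differentiableOn_univ, differentiableOn_dslope (by simp)]
  exact hf.differentiableOn

lemma chi_two : chi 2 = Real.pi / 3 := by
  have hpi : (Real.pi : ℂ) ≠ 0 := ofReal_ne_zero.mpr Real.pi_ne_zero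
  rw [chi_eq_mul_subOneMulZeta (by norm_num), subOneMulZeta_eq (by norm_num) (by norm_num),
    riemannZeta_two, div_self two_ne_zero, show (-2 : ℂ) / 2 = -1 by norm_num, cpow_neg_one,
    Gamma_add_one _ one_ne_zero, Gamma_one]
  field_simp
  norm_num

lemma chi_neg_one : chi (-1) = Real.pi / 3 := by
  rw [← chi_one_sub, ← chi_two]
  norm_num

lemma pi_add_three_ne_zero : (Real.pi : ℂ) + 3 ≠ 0 := by
  exact_mod_cast (by positivity : Real.pi + 3 ≠ 0)

/-- The bracket in `f2 s = (s - 2) * f2Bracket s`. -/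
noncomputable def f2Bracket (s : ℂ) : ℂ :=
  (A * s + 3) * (s - 1) ^ 2 * chi (s + 2) - 2 * (s - 1) * (s - 3) * chi (s + 1)
    - (s + 2) * (s - 3) * chi s

/-- The entire function `f2 s / ((s - 2) (s + 1))`. -/
noncomputable def f2Reduced : ℂ → ℂ := dslope f2Bracket (-1)

/-- The coefficient for which `Z2Numerator` vanishes at `0` and at `1`. -/
noncomputable def symmetricCoeff : ℂ := -3 * Real.pi / (Real.pi + 3)

/-- The first half of `Z2 s / ((s - 2) (s + 1))`, corrected by a term that is invariant under
`s ↦ 1 - s` and hence cancels in `Z2`. -/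
noncomputable def Z2Numerator (s : ℂ) : ℂ :=
  f2Reduced s * chi (2 * s) + symmetricCoeff * chi s * (chi (2 * s) + chi (2 * s - 1))

/-- The entire function `Z2Numerator s / (s (s - 1))`. -/
noncomputable def Z2Half : ℂ → ℂ := dslope (dslope Z2Numerator 0) 1

lemma differentiable_f2Bracket : Differentiable ℂ f2Bracket := by
  have := differentiable_chi
  unfold f2Bracket
  fun_prop

lemma add_one_mul_f2Reduced (s : ℂ) : (s + 1) * f2Reduced s = f2Bracket s := by
  have hroot : f2Bracket (-1) = 0 := by
    rw [f2Bracket, chi_neg_one, show (-1 : ℂ) + 2 = 1 by norm_num, neg_add_cancel, chi_zero,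
      chi_one, A]
    ring
  simpa [f2Reduced, hroot] using sub_smul_dslope f2Bracket (-1) s

lemma differentiable_Z2Numerator : Differentiable ℂ Z2Numerator := by
  have hchi := differentiable_chi
  have hreduced : Differentiable ℂ f2Reduced := differentiable_dslope differentiable_f2Bracket _
  unfold Z2Numerator
  fun_prop

lemma Z2Numerator_zero : Z2Numerator 0 = 0 := by
  have hpi := pi_add_three_ne_zero
  have h := add_one_mul_f2Reduced 0
  simp only [f2Bracket, zero_add, mul_zero, chi_two, chi_one, chi_zero, one_mul] at h
  rw [Z2Numerator, h]
  simp only [mul_zero, zero_sub, chi_zero, chi_neg_one, symmetricCoeff]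
  field_simp
  ring

lemma Z2Numerator_one : Z2Numerator 1 = 0 := by
  have hpi := pi_add_three_ne_zero
  have h : f2Reduced 1 = 3 := by
    have h := add_one_mul_f2Reduced 1
    simp only [f2Bracket, sub_self, chi_one] at h
    linear_combination h / 2
  rw [Z2Numerator, h]
  norm_num [chi_two, chi_one, symmetricCoeff]
  field_simp
  ring

lemma mul_Z2Half (s : ℂ) : s * (s - 1) * Z2Half s = Z2Numerator s := by
  have hslope (z : ℂ) : z * dslope Z2Numerator 0 z = Z2Numerator z := by
    simpa [Z2Numerator_zero] using sub_smul_dslope Z2Numerator 0 z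
  have hslope_one : dslope Z2Numerator 0 1 = 0 := by
    simpa [Z2Numerator_one] using hslope 1
  have hhalf : (s - 1) * Z2Half s = dslope Z2Numerator 0 s := by
    simpa [hslope_one, Z2Half] using sub_smul_dslope (dslope Z2Numerator 0) 1 s
  rw [mul_assoc, hhalf, hslope]

lemma differentiable_Z2Half : Differentiable ℂ Z2Half :=
  differentiable_dslope (differentiable_dslope differentiable_Z2Numerator _) _

lemma chi_two_mul_one_sub (s : ℂ) : chi (2 * (1 - s)) = chi (2 * s - 1) := by
  rw [← chi_one_sub]
  ring_nf

lemma chi_two_mul_one_sub_sub_one (s : ℂ) : chi (2 * (1 - s) - 1) = chi (2 * s) := by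
  rw [← chi_one_sub]
  ring_nf

theorem Z2_eq_mul_sub (s : ℂ) :
    Z2 s = (s - 2) * (s + 1) * s * (s - 1) * (Z2Half s - Z2Half (1 - s)) := by
  have hf2 (z : ℂ) : f2 z = (z - 2) * ((z + 1) * f2Reduced z) := by
    rw [add_one_mul_f2Reduced, f2, f2Bracket]
  have hs := mul_Z2Half s
  have hs' := mul_Z2Half (1 - s)
  rw [Z2Numerator] at hs hs'
  rw [chi_two_mul_one_sub, chi_two_mul_one_sub_sub_one, chi_one_sub] at hs'
  rw [Z2, hf2, hf2]
  linear_combination (-(s - 2) * (s + 1)) * hs + ((s - 2) * (s + 1)) * hs'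

lemma mul_Z2Half_eq (s : ℂ) :
    s * (s - 1) * (s + 1) * Z2Half s =
      (A * s + 3) * (s - 1) ^ 2 * (chi (2 * s) * chi (s + 2))
        - 2 * (s - 1) * (s - 3) * (chi (2 * s) * chi (s + 1))
        - (s + 2) * (s - 3) * (chi (2 * s) * chi s)
        + symmetricCoeff * (s + 1) * ((chi (2 * s) + chi (2 * s - 1)) * chi s) := by
  have hhalf := mul_Z2Half s
  have hreduced := add_one_mul_f2Reduced s
  rw [Z2Numerator] at hhalf
  rw [f2Bracket] at hreduced
  linear_combination (s + 1) * hhalf + chi (2 * s) * hreduced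

lemma mul_Z2Half_one_sub_eq (s : ℂ) :
    s * (s - 1) * (2 - s) * Z2Half (1 - s) =
      (A * (1 - s) + 3) * s ^ 2 * (chi (2 * s - 1) * chi (s - 2))
        - 2 * s * (s + 2) * (chi (2 * s - 1) * chi (s - 1))
        - (s + 2) * (s - 3) * (chi (2 * s - 1) * chi s)
        + symmetricCoeff * (2 - s) * ((chi (2 * s) + chi (2 * s - 1)) * chi s) := by
  have h := mul_Z2Half_eq (1 - s)
  have h2 : chi (1 - s + 2) = chi (s - 2) := by rw [← chi_one_sub]; ring_nf
  have h1 : chi (1 - s + 1) = chi (s - 1) := by rw [← chi_one_sub]; ring_nf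
  rw [chi_two_mul_one_sub, chi_two_mul_one_sub_sub_one, chi_one_sub, h1, h2] at h
  linear_combination h

end Factorization

section Normalization

variable {s : ℂ}

lemma norm_chi_le_norm_chi_add_one (hs : 0 ≤ s.re) : ‖chi s‖ ≤ ‖chi (s + 1)‖ := by
  have := norm_chi_sub_le_norm_chi_add (a := 1 / 2) le_rfl (by norm_num) (s := s + 1 / 2)
    (by simpa using hs)
  push_cast at this
  rwa [add_sub_cancel_right, add_assoc, add_halves] at this

lemma norm_chi_add_one_le_norm_chi_add_two (hs : 1 / 2 ≤ s.re) :
    ‖chi (s + 1)‖ ≤ ‖chi (s + 2)‖ := by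
  simpa [add_assoc, one_add_one_eq_two] using
    norm_chi_le_norm_chi_add_one (s := s + 1) (by simp; linarith)

lemma norm_chi_le_norm_chi_add_two (hs : 1 / 2 ≤ s.re) : ‖chi s‖ ≤ ‖chi (s + 2)‖ :=
  (norm_chi_le_norm_chi_add_one (by linarith)).trans (norm_chi_add_one_le_norm_chi_add_two hs)

lemma norm_chi_sub_one_le_norm_chi_add_two (hs : 1 / 2 ≤ s.re) :
    ‖chi (s - 1)‖ ≤ ‖chi (s + 2)‖ :=
  (by simpa using norm_chi_sub_le_norm_chi_add (a := 1) (by norm_num) (by norm_num) hs :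
    ‖chi (s - 1)‖ ≤ ‖chi (s + 1)‖).trans (norm_chi_add_one_le_norm_chi_add_two hs)

lemma norm_chi_sub_two_le_norm_chi_add_two (hs : 1 / 2 ≤ s.re) :
    ‖chi (s - 2)‖ ≤ ‖chi (s + 2)‖ := by
  simpa using norm_chi_sub_le_norm_chi_add (a := 2) (by norm_num) le_rfl hs

lemma norm_chi_two_mul_sub_one_le (hs : 1 / 2 ≤ s.re) :
    ‖chi (2 * s - 1)‖ ≤ ‖chi (2 * s)‖ := by
  simpa using norm_chi_le_norm_chi_add_one (s := 2 * s - 1) (by simp; linarith)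

lemma A_eq_ofReal : A = ((Real.pi / 3 - 1 : ℝ) : ℂ) := by simp [A]

lemma three_le_norm_A_mul_add_three (hs : 0 ≤ s.re) : 3 ≤ ‖A * s + 3‖ := by
  refine le_trans ?_ (re_le_norm _)
  have hA : 0 ≤ Real.pi / 3 - 1 := by linarith [Real.pi_gt_three]
  rw [A_eq_ofReal, add_re, re_ofReal_mul]
  simpa using mul_nonneg hA hs

/-- The size of `Z2Half` on the half-plane `1 / 2 ≤ re s`: the leading term of `Z2Half` there is
`normalizer s * (s - 1) / s`. -/
noncomputable def normalizer (s : ℂ) : ℂ := chi (2 * s) * chi (s + 2) * (A * s + 3) / (s + 1)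

lemma chi_two_mul_mul_chi_add_two_ne_zero (hs : 1 / 2 ≤ s.re) :
    chi (2 * s) * chi (s + 2) ≠ 0 :=
  mul_ne_zero (chi_ne_zero (by simp; linarith)) (chi_ne_zero (by simp; linarith))

lemma A_mul_add_three_ne_zero (hs : 0 ≤ s.re) : A * s + 3 ≠ 0 :=
  norm_pos_iff.mp (by linarith [three_le_norm_A_mul_add_three hs])

lemma add_one_ne_zero_of_re (hs : 0 ≤ s.re) : s + 1 ≠ 0 := fun h => by
  have := congrArg re h
  simp at this
  linarith

lemma normalizer_ne_zero (hs : 1 / 2 ≤ s.re) : normalizer s ≠ 0 :=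
  div_ne_zero (mul_ne_zero (chi_two_mul_mul_chi_add_two_ne_zero hs)
    (A_mul_add_three_ne_zero (by linarith))) (add_one_ne_zero_of_re (by linarith))

lemma differentiableAt_normalizer (hs : 1 / 2 ≤ s.re) : DifferentiableAt ℂ normalizer s := by
  have hchi := differentiable_chi
  have h1 := add_one_ne_zero_of_re (s := s) (by linarith)
  unfold normalizer
  fun_prop (disch := assumption)

lemma differentiableAt_Z2Half_div_normalizer (hs : 1 / 2 ≤ s.re) :
    DifferentiableAt ℂ (fun s => Z2Half s / normalizer s) s :=
  (differentiable_Z2Half s).fun_div (differentiableAt_normalizer hs) (normalizer_ne_zero hs)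

lemma differentiableAt_Z2Half_one_sub_div_normalizer (hs : 1 / 2 ≤ s.re) :
    DifferentiableAt ℂ (fun s => Z2Half (1 - s) / normalizer s) s := by
  have hhalf := differentiable_Z2Half
  have hnormalizer := differentiableAt_normalizer hs
  have hne := normalizer_ne_zero hs
  fun_prop (disch := assumption)

lemma exists_norm_le_of_re_ge {f : ℂ → ℂ} {σ R C : ℝ} (hf : ContinuousOn f {s | σ ≤ s.re})
    (hfar : ∀ s : ℂ, σ ≤ s.re → R ≤ ‖s‖ → ‖f s‖ ≤ C) :
    ∃ C, ∀ s : ℂ, σ ≤ s.re → ‖f s‖ ≤ C := by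
  have hcompact : IsCompact ({s : ℂ | σ ≤ s.re} ∩ Metric.closedBall 0 R) :=
    (isCompact_closedBall 0 R).inter_left (isClosed_le continuous_const continuous_re)
  obtain ⟨B, hB⟩ := hcompact.exists_bound_of_continuousOn (hf.mono inter_subset_left)
  refine ⟨max B C, fun s hs => ?_⟩
  rcases le_total ‖s‖ R with hsR | hsR
  · exact (hB s ⟨hs, by simpa using hsR⟩).trans (le_max_left _ _)
  · exact (hfar s hs hsR).trans (le_max_right _ _)

lemma norm_sub_sub_add_le (a b c d : ℂ) : ‖a - b - c + d‖ ≤ ‖a‖ + ‖b‖ + ‖c‖ + ‖d‖ :=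
  (norm_add_le _ _).trans (by gcongr; exact norm_sub_le_of_le (norm_sub_le _ _) le_rfl)

lemma norm_add_le_two_mul {b : ℂ} (hs : 3 ≤ ‖s‖) (hb : ‖b‖ ≤ 3) : ‖s + b‖ ≤ 2 * ‖s‖ := by
  linarith [norm_add_le s b]

lemma norm_sub_le_two_mul {b : ℂ} (hs : 3 ≤ ‖s‖) (hb : ‖b‖ ≤ 3) : ‖s - b‖ ≤ 2 * ‖s‖ := by
  linarith [norm_sub_le s b]

lemma norm_le_three_mul_norm_sub {b : ℂ} (hs : 3 ≤ ‖s‖) (hb : ‖b‖ ≤ 2) :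
    ‖s‖ ≤ 3 * ‖s - b‖ := by
  linarith [norm_sub_norm_le s b]

/-- The common bound for the products of values of `chi` in `mul_Z2Half_eq` and
`mul_Z2Half_one_sub_eq`. -/
noncomputable def chiScale (s : ℂ) : ℝ := ‖chi (2 * s)‖ * ‖chi (s + 2)‖

lemma norm_chi_sum_mul_chi_le (hs : 1 / 2 ≤ s.re) :
    ‖(chi (2 * s) + chi (2 * s - 1)) * chi s‖ ≤ 2 * chiScale s := by
  have h1 := norm_chi_two_mul_sub_one_le hs
  have h2 := norm_chi_le_norm_chi_add_two hs
  rw [norm_mul, chiScale, ← mul_assoc]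
  gcongr
  linarith [norm_add_le (chi (2 * s)) (chi (2 * s - 1))]

lemma norm_mul_Z2Half_le (hs : 1 / 2 ≤ s.re) (hr : 3 ≤ ‖s‖) :
    ‖s * (s - 1) * (s + 1) * Z2Half s‖ ≤
      (16 + 4 * ‖symmetricCoeff‖) * (chiScale s * ‖A * s + 3‖ * ‖s‖ ^ 2) := by
  have hD : 1 ≤ ‖A * s + 3‖ := by linarith [three_le_norm_A_mul_add_three (s := s) (by linarith)]
  have h1 : ‖s + 1‖ ≤ 2 * ‖s‖ := norm_add_le_two_mul hr (by norm_num)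
  have h2 : ‖s + 2‖ ≤ 2 * ‖s‖ := norm_add_le_two_mul hr (by norm_num)
  have h3 : ‖s - 1‖ ≤ 2 * ‖s‖ := norm_sub_le_two_mul hr (by norm_num)
  have h4 : ‖s - 3‖ ≤ 2 * ‖s‖ := norm_sub_le_two_mul hr (by norm_num)
  have hchi1 := norm_chi_add_one_le_norm_chi_add_two hs
  have hchi0 := norm_chi_le_norm_chi_add_two hs
  have hsum := norm_chi_sum_mul_chi_le hs
  have hX : 0 ≤ chiScale s := by unfold chiScale; positivity
  rw [mul_Z2Half_eq]
  calc _ ≤ ‖A * s + 3‖ * (2 * ‖s‖) ^ 2 * chiScale s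
        + 2 * (2 * ‖s‖) * (2 * ‖s‖) * chiScale s
        + 2 * ‖s‖ * (2 * ‖s‖) * chiScale s
        + ‖symmetricCoeff‖ * (2 * ‖s‖) * (2 * chiScale s) := by
        refine (norm_sub_sub_add_le _ _ _ _).trans ?_
        simp only [norm_mul, norm_pow, RCLike.norm_ofNat, chiScale] at hsum ⊢
        gcongr
    _ = (4 * ‖A * s + 3‖ * ‖s‖ + 12 * ‖s‖ + 4 * ‖symmetricCoeff‖) * (chiScale s * ‖s‖) := by ring
    _ ≤ (4 * ‖A * s + 3‖ * ‖s‖ + 12 * (‖A * s + 3‖ * ‖s‖) +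
          4 * ‖symmetricCoeff‖ * (‖A * s + 3‖ * ‖s‖)) * (chiScale s * ‖s‖) := by
        have h : ‖s‖ ≤ ‖A * s + 3‖ * ‖s‖ := le_mul_of_one_le_left (norm_nonneg _) hD
        have hc : 4 * ‖symmetricCoeff‖ ≤ 4 * ‖symmetricCoeff‖ * (‖A * s + 3‖ * ‖s‖) :=
          le_mul_of_one_le_right (by positivity) (by linarith)
        exact mul_le_mul_of_nonneg_right (by linarith) (by positivity)
    _ = _ := by ring

lemma norm_mul_Z2Half_one_sub_le (hs : 1 / 2 ≤ s.re) (hr : 3 ≤ ‖s‖) :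
    ‖s * (s - 1) * (2 - s) * Z2Half (1 - s)‖ ≤
      (‖A‖ + 15 + 4 * ‖symmetricCoeff‖) * (chiScale s * ‖A * s + 3‖ * ‖s‖ ^ 2) := by
  have hD : 1 ≤ ‖A * s + 3‖ := by linarith [three_le_norm_A_mul_add_three (s := s) (by linarith)]
  have hD' : ‖A * (1 - s) + 3‖ ≤ (‖A‖ + 7) * ‖A * s + 3‖ := by
    have : ‖A * (1 - s) + 3‖ ≤ ‖A‖ + 6 + ‖A * s + 3‖ := by
      rw [show A * (1 - s) + 3 = A + 6 - (A * s + 3) by ring]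
      exact norm_sub_le_of_le ((norm_add_le _ _).trans (by simp)) le_rfl
    nlinarith [norm_nonneg A]
  have h2 : ‖s + 2‖ ≤ 2 * ‖s‖ := norm_add_le_two_mul hr (by norm_num)
  have h3 : ‖2 - s‖ ≤ 2 * ‖s‖ := norm_sub_rev s 2 ▸ norm_sub_le_two_mul hr (by norm_num)
  have h4 : ‖s - 3‖ ≤ 2 * ‖s‖ := norm_sub_le_two_mul hr (by norm_num)
  have hchi2 := norm_chi_sub_two_le_norm_chi_add_two hs
  have hchi1 := norm_chi_sub_one_le_norm_chi_add_two hs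
  have hchi0 := norm_chi_le_norm_chi_add_two hs
  have hchi := norm_chi_two_mul_sub_one_le hs
  have hsum := norm_chi_sum_mul_chi_le hs
  have hX : 0 ≤ chiScale s := by unfold chiScale; positivity
  rw [mul_Z2Half_one_sub_eq]
  calc _ ≤ (‖A‖ + 7) * ‖A * s + 3‖ * ‖s‖ ^ 2 * chiScale s
        + 2 * ‖s‖ * (2 * ‖s‖) * chiScale s
        + 2 * ‖s‖ * (2 * ‖s‖) * chiScale s
        + ‖symmetricCoeff‖ * (2 * ‖s‖) * (2 * chiScale s) := by
        refine (norm_sub_sub_add_le _ _ _ _).trans ?_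
        simp only [norm_mul, norm_pow, RCLike.norm_ofNat, chiScale] at hsum ⊢
        gcongr
    _ = ((‖A‖ + 7) * ‖A * s + 3‖ * ‖s‖ + 8 * ‖s‖ + 4 * ‖symmetricCoeff‖) *
          (chiScale s * ‖s‖) := by ring
    _ ≤ ((‖A‖ + 7) * ‖A * s + 3‖ * ‖s‖ + 8 * (‖A * s + 3‖ * ‖s‖) +
          4 * ‖symmetricCoeff‖ * (‖A * s + 3‖ * ‖s‖)) * (chiScale s * ‖s‖) := by
        have h : ‖s‖ ≤ ‖A * s + 3‖ * ‖s‖ := le_mul_of_one_le_left (norm_nonneg _) hD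
        have hc : 4 * ‖symmetricCoeff‖ ≤ 4 * ‖symmetricCoeff‖ * (‖A * s + 3‖ * ‖s‖) :=
          le_mul_of_one_le_right (by positivity) (by linarith)
        exact mul_le_mul_of_nonneg_right (by linarith) (by positivity)
    _ = _ := by ring

lemma chiScale_pos (hs : 1 / 2 ≤ s.re) : 0 < chiScale s := by
  simpa only [chiScale, ← norm_mul, norm_pos_iff] using chi_two_mul_mul_chi_add_two_ne_zero hs

lemma norm_div_normalizer (z : ℂ) :
    ‖z / normalizer s‖ = ‖z‖ * ‖s + 1‖ / (chiScale s * ‖A * s + 3‖) := by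
  rw [normalizer, chiScale, norm_div, norm_div, norm_mul, norm_mul, div_div_eq_mul_div]

lemma exists_norm_Z2Half_div_normalizer_le :
    ∃ C, ∀ s : ℂ, 1 / 2 ≤ s.re → ‖Z2Half s / normalizer s‖ ≤ C := by
  refine exists_norm_le_of_re_ge (f := fun s => Z2Half s / normalizer s) (R := 3)
    (C := 3 * (16 + 4 * ‖symmetricCoeff‖)) (fun s hs =>
      (differentiableAt_Z2Half_div_normalizer hs).continuousAt.continuousWithinAt)
    fun s hs hr => ?_
  have hs0 : 0 < ‖s‖ := by linarith
  have hX := chiScale_pos hs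
  have hD : 0 < ‖A * s + 3‖ := norm_pos_iff.mpr (A_mul_add_three_ne_zero (by linarith))
  have h1 : ‖s‖ ≤ 3 * ‖s - 1‖ := norm_le_three_mul_norm_sub hr (by simp)
  have hmul := norm_mul_Z2Half_le hs hr
  rw [norm_mul, norm_mul, norm_mul] at hmul
  rw [norm_div_normalizer, div_le_iff₀ (by positivity)]
  refine le_of_mul_le_mul_right ?_ (pow_pos hs0 2)
  calc ‖Z2Half s‖ * ‖s + 1‖ * ‖s‖ ^ 2 ≤ ‖Z2Half s‖ * ‖s + 1‖ * (‖s‖ * (3 * ‖s - 1‖)) := by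
        rw [sq]
        gcongr
    _ = 3 * (‖s‖ * ‖s - 1‖ * ‖s + 1‖ * ‖Z2Half s‖) := by ring
    _ ≤ _ := by linarith

lemma exists_norm_Z2Half_one_sub_div_normalizer_le :
    ∃ C, ∀ s : ℂ, 1 / 2 ≤ s.re → ‖Z2Half (1 - s) / normalizer s‖ ≤ C := by
  refine exists_norm_le_of_re_ge (f := fun s => Z2Half (1 - s) / normalizer s) (R := 3)
    (C := 18 * (‖A‖ + 15 + 4 * ‖symmetricCoeff‖)) (fun s hs =>
      (differentiableAt_Z2Half_one_sub_div_normalizer hs).continuousAt.continuousWithinAt)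
    fun s hs hr => ?_
  have hs0 : 0 < ‖s‖ := by linarith
  have hX := chiScale_pos hs
  have hD : 0 < ‖A * s + 3‖ := norm_pos_iff.mpr (A_mul_add_three_ne_zero (by linarith))
  have h1 : ‖s‖ ≤ 3 * ‖s - 1‖ := norm_le_three_mul_norm_sub hr (by simp)
  have h2 : ‖s‖ ≤ 3 * ‖2 - s‖ := norm_sub_rev s 2 ▸ norm_le_three_mul_norm_sub hr (by simp)
  have h3 : ‖s + 1‖ ≤ 2 * ‖s‖ := norm_add_le_two_mul hr (by norm_num)
  have hmul := norm_mul_Z2Half_one_sub_le hs hr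
  rw [norm_mul, norm_mul, norm_mul] at hmul
  rw [norm_div_normalizer, div_le_iff₀ (by positivity)]
  refine le_of_mul_le_mul_right ?_ (pow_pos hs0 2)
  calc ‖Z2Half (1 - s)‖ * ‖s + 1‖ * ‖s‖ ^ 2
      ≤ ‖Z2Half (1 - s)‖ * (2 * ‖s‖) * (3 * ‖s - 1‖ * (3 * ‖2 - s‖)) := by
        rw [sq]
        gcongr
    _ = 18 * (‖s‖ * ‖s - 1‖ * ‖2 - s‖ * ‖Z2Half (1 - s)‖) := by ring
    _ ≤ _ := by linarith

end Normalization

section GammaRatio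

/-- The ratio `Γ(z + 1/2) / Γ(z)`, which is close to `√(z - 1/4)`. -/
noncomputable def gammaRatio (z : ℂ) : ℂ := Gamma (z + 1 / 2) / Gamma z

/-- The infinite product of `1 + gammaRatioTerm z j` over `j : ℕ` is
`gammaRatio z ^ 2 / (z - 1 / 4)`. -/
noncomputable def gammaRatioTerm (z : ℂ) (j : ℕ) : ℂ :=
  1 / 16 / ((z + j + 1 / 2) ^ 2 * (z + j - 1 / 4))

variable {z : ℂ}

lemma add_natCast_add_ofReal_ne_zero {c : ℝ} (hz : 0 < z.re + c) (j : ℕ) :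
    z + j + (c : ℂ) ≠ 0 := fun h => by
  have := congrArg re h
  simp only [add_re, natCast_re, ofReal_re, zero_re] at this
  linarith [(Nat.cast_nonneg j : (0 : ℝ) ≤ j)]

lemma add_natCast_sub_quarter_ne_zero (hz : 1 / 4 < z.re) (j : ℕ) : z + j - 1 / 4 ≠ 0 := by
  have := add_natCast_add_ofReal_ne_zero (z := z) (c := -(1 / 4)) (by linarith) j
  push_cast at this
  rwa [← sub_eq_add_neg] at this

lemma add_natCast_add_half_ne_zero (hz : 0 < z.re) (j : ℕ) : z + j + 1 / 2 ≠ 0 := by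
  have := add_natCast_add_ofReal_ne_zero (z := z) (c := 1 / 2) (by linarith) j
  push_cast at this
  exact this

lemma add_natCast_ne_zero (hz : 0 < z.re) (j : ℕ) : z + j ≠ 0 := by
  simpa using add_natCast_add_ofReal_ne_zero (c := 0) (by simpa using hz) j

lemma one_div_cube_le_telescope {c : ℝ} (hc : 1 / 2 < c) :
    1 / 16 / c ^ 3 ≤ 1 / 32 * (1 / (c - 1 / 2) ^ 2 - 1 / (c + 1 / 2) ^ 2) := by
  have : 0 < c := by linarith
  have : 0 < (c - 1 / 2) * (c + 1 / 2) := mul_pos (by linarith) (by linarith)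
  have hsq : ((c - 1 / 2) * (c + 1 / 2)) ^ 2 ≤ c ^ 4 := by
    rw [show c ^ 4 = (c ^ 2) ^ 2 by ring]
    gcongr
    nlinarith
  have htelescope : 1 / (c - 1 / 2) ^ 2 - 1 / (c + 1 / 2) ^ 2 =
      2 * c / ((c - 1 / 2) * (c + 1 / 2)) ^ 2 := by
    have h1 : c - 1 / 2 ≠ 0 := by linarith
    have h2 : c + 1 / 2 ≠ 0 := by linarith
    rw [div_sub_div _ _ (pow_ne_zero 2 h1) (pow_ne_zero 2 h2), mul_pow]
    ring
  rw [htelescope]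
  calc 1 / 16 / c ^ 3 = 1 / 32 * (2 * c / c ^ 4) := by field_simp; norm_num
    _ ≤ _ := by gcongr

lemma norm_gammaRatioTerm_le (hz : 3 / 4 < z.re) (j : ℕ) :
    ‖gammaRatioTerm z j‖ ≤
      1 / 32 * (1 / (z.re - 3 / 4 + j) ^ 2 - 1 / (z.re - 3 / 4 + (j + 1 : ℕ)) ^ 2) := by
  have : (0 : ℝ) ≤ j := Nat.cast_nonneg j
  set c := z.re + j - 1 / 4 with hc
  have hc0 : 0 < c := by linarith
  have hquarter : c ≤ ‖z + j - 1 / 4‖ := (re_le_norm _).trans' (by simp [hc])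
  have hhalf : c ≤ ‖z + j + 1 / 2‖ := (re_le_norm _).trans' (by simp [hc]; linarith)
  calc ‖gammaRatioTerm z j‖ = 1 / 16 / (‖z + j + 1 / 2‖ ^ 2 * ‖z + j - 1 / 4‖) := by
        rw [gammaRatioTerm, norm_div, norm_mul, norm_pow]
        norm_num
    _ ≤ 1 / 16 / (c ^ 2 * c) := by gcongr
    _ = 1 / 16 / c ^ 3 := by ring
    _ ≤ 1 / 32 * (1 / (c - 1 / 2) ^ 2 - 1 / (c + 1 / 2) ^ 2) :=
        one_div_cube_le_telescope (by linarith)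
    _ = _ := by rw [hc]; push_cast; ring

lemma sum_norm_gammaRatioTerm_le (hz : 3 / 4 < z.re) (n : ℕ) :
    ∑ j ∈ Finset.range n, ‖gammaRatioTerm z j‖ ≤ 1 / (32 * (z.re - 3 / 4) ^ 2) := by
  refine (Finset.sum_le_sum fun j _ => norm_gammaRatioTerm_le hz j).trans ?_
  rw [← Finset.mul_sum,
    Finset.sum_range_sub' (fun j : ℕ => 1 / (z.re - 3 / 4 + j) ^ 2), Nat.cast_zero, add_zero,
    ← one_div_mul_one_div]
  gcongr
  exact sub_le_self _ (by positivity)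

lemma one_add_gammaRatioTerm (hz : 1 / 4 < z.re) (j : ℕ) :
    1 + gammaRatioTerm z j =
      ((z + j) / (z + j + 1 / 2)) ^ 2 * ((z + (j + 1 : ℕ) - 1 / 4) / (z + j - 1 / 4)) := by
  have hquarter := add_natCast_sub_quarter_ne_zero hz j
  have hhalf := add_natCast_add_half_ne_zero (by linarith) j
  rw [gammaRatioTerm, div_pow, div_mul_div_comm, one_add_div (by positivity)]
  congr 1
  push_cast
  ring

lemma prod_one_add_gammaRatioTerm (hz : 1 / 4 < z.re) (n : ℕ) :
    ∏ j ∈ Finset.range n, (1 + gammaRatioTerm z j) =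
      ((∏ j ∈ Finset.range n, (z + j)) / ∏ j ∈ Finset.range n, (z + j + 1 / 2)) ^ 2 *
        ((z + n - 1 / 4) / (z - 1 / 4)) := by
  have htelescope : ∏ j ∈ Finset.range n, ((z + (j + 1 : ℕ) - 1 / 4) / (z + j - 1 / 4)) =
      (z + n - 1 / 4) / (z - 1 / 4) := by
    refine Finset.prod_range_induction _ (fun n : ℕ => (z + n - 1 / 4) / (z - 1 / 4)) ?_ n
      fun k _ => ?_
    · simpa using div_self (by simpa using add_natCast_sub_quarter_ne_zero hz 0)
    · rw [div_mul_div_cancel₀' (add_natCast_sub_quarter_ne_zero hz k)]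
  simp only [one_add_gammaRatioTerm hz, Finset.prod_mul_distrib, htelescope, Finset.prod_pow,
    Finset.prod_div_distrib]

lemma sq_GammaSeq_div_GammaSeq (hz : 1 / 4 < z.re) {n : ℕ} (hn : 0 < n) :
    (GammaSeq (z + 1 / 2) n / GammaSeq z n) ^ 2 =
      n / (z + n + 3 / 4) *
        ((z - 1 / 4) * ∏ j ∈ Finset.range (n + 1), (1 + gammaRatioTerm z j)) := by
  have hn0 : (n : ℂ) ≠ 0 := Nat.cast_ne_zero.mpr hn.ne'
  have hhalf : ∏ j ∈ Finset.range (n + 1), (z + 1 / 2 + j) =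
      ∏ j ∈ Finset.range (n + 1), (z + j + 1 / 2) := Finset.prod_congr rfl fun j _ => by ring
  have hsqrt : ((n : ℂ) ^ (1 / 2 : ℂ)) ^ 2 = n := by simp [← cpow_nat_mul]
  have hquarter : z - 1 / 4 ≠ 0 := by simpa using add_natCast_sub_quarter_ne_zero hz 0
  have hlast : z + n + 3 / 4 ≠ 0 := by
    have := add_natCast_sub_quarter_ne_zero hz (n + 1)
    push_cast at this
    rwa [show z + (n + 1) - 1 / 4 = z + n + 3 / 4 by ring] at this
  have hpow : (n : ℂ) ^ z ≠ 0 := by simp [cpow_eq_zero_iff, hn0]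
  have hfactorial : (n.factorial : ℂ) ≠ 0 := Nat.cast_ne_zero.mpr n.factorial_ne_zero
  have hprod : ∏ j ∈ Finset.range (n + 1), (z + j) ≠ 0 :=
    Finset.prod_ne_zero_iff.mpr fun j _ => add_natCast_ne_zero (by linarith) j
  have hprod_half : ∏ j ∈ Finset.range (n + 1), (z + j + 1 / 2) ≠ 0 :=
    Finset.prod_ne_zero_iff.mpr fun j _ => add_natCast_add_half_ne_zero (by linarith) j
  rw [prod_one_add_gammaRatioTerm hz, GammaSeq, GammaSeq, hhalf, cpow_add _ _ hn0]
  push_cast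
  rw [show z + (n + 1) - 1 / 4 = z + n + 3 / 4 by ring]
  generalize ∏ j ∈ Finset.range (n + 1), (z + j + 1 / 2) = P at *
  generalize z + n + 3 / 4 = Y at *
  generalize z - 1 / 4 = Q at *
  field_simp
  rw [hsqrt]

lemma tendsto_add_natCast_add_div_natCast (c : ℂ) :
    Tendsto (fun n : ℕ => (c + n) / n) atTop (𝓝 1) := by
  have hlim : Tendsto (fun n : ℕ => c * ((n : ℂ))⁻¹ + 1) atTop (𝓝 (c * 0 + 1)) :=
    ((tendsto_inv_atTop_nhds_zero_nat (𝕜 := ℂ)).const_mul _).add_const 1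
  rw [mul_zero, zero_add] at hlim
  refine hlim.congr' ?_
  filter_upwards [eventually_gt_atTop 0] with n hn
  have hn0 : (n : ℂ) ≠ 0 := Nat.cast_ne_zero.mpr hn.ne'
  rw [add_div, div_self hn0, div_eq_mul_inv]

lemma tendsto_prod_one_add_gammaRatioTerm (hz : 1 / 4 < z.re) :
    Tendsto (fun n : ℕ => ∏ j ∈ Finset.range (n + 1), (1 + gammaRatioTerm z j)) atTop
      (𝓝 (gammaRatio z ^ 2 / (z - 1 / 4))) := by
  have hGamma : Tendsto (fun n : ℕ => (GammaSeq (z + 1 / 2) n / GammaSeq z n) ^ 2) atTop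
      (𝓝 (gammaRatio z ^ 2)) :=
    ((GammaSeq_tendsto_Gamma _).div (GammaSeq_tendsto_Gamma _)
      (Gamma_ne_zero_of_re_pos (by linarith))).pow 2
  have hlim := ((tendsto_add_natCast_add_div_natCast (z + 3 / 4)).mul hGamma).div_const (z - 1 / 4)
  rw [one_mul] at hlim
  refine hlim.congr' ?_
  filter_upwards [eventually_gt_atTop 0] with n hn
  have hn0 : (n : ℂ) ≠ 0 := Nat.cast_ne_zero.mpr hn.ne'
  have hquarter : z - 1 / 4 ≠ 0 := by simpa using add_natCast_sub_quarter_ne_zero hz 0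
  have hlast : z + 3 / 4 + n ≠ 0 := by
    have := add_natCast_sub_quarter_ne_zero hz (n + 1)
    push_cast at this
    rwa [show z + (n + 1) - 1 / 4 = z + 3 / 4 + n by ring] at this
  rw [sq_GammaSeq_div_GammaSeq hz hn, add_right_comm z n (3 / 4)]
  generalize z + 3 / 4 + n = Y at *
  generalize z - 1 / 4 = Q at *
  field_simp

lemma norm_sq_gammaRatio_div_sub_one_lt (hz : 1 ≤ z.re) :
    ‖gammaRatio z ^ 2 / (z - 1 / 4) - 1‖ < 1 / (32 * (z.re - 3 / 4) ^ 2 - 1) := by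
  set x : ℝ := 1 / (32 * (z.re - 3 / 4) ^ 2) with hx
  have hsq : 2 ≤ 32 * (z.re - 3 / 4) ^ 2 := by nlinarith
  have hx0 : 0 < x := by positivity
  have hx1 : x < 1 := by
    rw [hx, div_lt_one (by positivity)]
    linarith
  have hexp : ‖gammaRatio z ^ 2 / (z - 1 / 4) - 1‖ ≤ Real.exp x - 1 := by
    refine le_of_tendsto
      ((tendsto_prod_one_add_gammaRatioTerm (by linarith)).sub_const 1).norm
      (Eventually.of_forall fun n => (Finset.norm_prod_one_add_sub_one_le _ _).trans ?_)
    gcongr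
    exact sum_norm_gammaRatioTerm_le (by linarith) _
  calc ‖gammaRatio z ^ 2 / (z - 1 / 4) - 1‖ ≤ Real.exp x - 1 := hexp
    _ < 1 / (1 - x) - 1 := by
        gcongr
        exact Real.exp_bound_div_one_sub_of_interval' hx0 hx1
    _ = 1 / (32 * (z.re - 3 / 4) ^ 2 - 1) := by
        have h1 : 32 * (z.re - 3 / 4) ^ 2 - 1 ≠ 0 := by linarith
        have h0 : 32 * (z.re - 3 / 4) ^ 2 ≠ 0 := by linarith
        rw [hx]
        generalize 32 * (z.re - 3 / 4) ^ 2 = y at *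
        field_simp
        ring

lemma gammaRatio_eq_mul (hz : 0 < z.re) :
    gammaRatio z = gammaRatio (z + 1) * (1 - (2 * z + 1)⁻¹) := by
  have h0 : z ≠ 0 := by simpa using add_natCast_ne_zero hz 0
  have hhalf : z + 1 / 2 ≠ 0 := by simpa using add_natCast_add_half_ne_zero hz 0
  have hGamma : Gamma z ≠ 0 := Gamma_ne_zero_of_re_pos hz
  have hfactor : 1 - (2 * z + 1)⁻¹ = z / (z + 1 / 2) := by
    rw [show 2 * z + 1 = 2 * (z + 1 / 2) by ring, eq_div_iff hhalf, sub_mul, mul_inv,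
      inv_mul_cancel_right₀ hhalf]
    ring
  rw [gammaRatio, gammaRatio, show z + 1 + 1 / 2 = z + 1 / 2 + 1 by ring, Gamma_add_one _ h0,
    Gamma_add_one _ hhalf, hfactor]
  generalize z + 1 / 2 = y at *
  field_simp

lemma differentiableAt_gammaRatio (hz : 0 < z.re) : DifferentiableAt ℂ gammaRatio z := by
  have hGamma {w : ℂ} (hw : 0 < w.re) : DifferentiableAt ℂ Gamma w :=
    differentiableAt_Gamma w fun m h => by
      have := congrArg re h
      simp only [neg_re, natCast_re] at this
      linarith [(Nat.cast_nonneg m : (0 : ℝ) ≤ m)]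
  exact ((hGamma (by simp; linarith)).comp z (f := fun z => z + 1 / 2) (by fun_prop)).div
    (hGamma hz) (Gamma_ne_zero_of_re_pos hz)

lemma gammaRatio_re_ne_zero (hz : 1 ≤ z.re) : (gammaRatio z).re ≠ 0 := fun h => by
  set e := gammaRatio z ^ 2 / (z - 1 / 4) - 1 with he
  have hnorm : ‖e‖ < 1 := by
    refine (norm_sq_gammaRatio_div_sub_one_lt hz).trans_le ?_
    rw [div_le_one (by nlinarith)]
    nlinarith
  have hpos : 0 < (1 + e).re := by
    simp only [add_re, one_re]
    linarith [(abs_le.mp (abs_re_le_norm e)).1]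
  have hsq : gammaRatio z ^ 2 = ((-(gammaRatio z).im ^ 2 : ℝ) : ℂ) := by
    apply Complex.ext <;> simp [sq, h]
  have hnonpos : (1 + e).re ≤ 0 := by
    rw [he, add_sub_cancel, hsq, div_eq_mul_inv, re_ofReal_mul, inv_re]
    refine mul_nonpos_of_nonpos_of_nonneg (by simpa using sq_nonneg _)
      (div_nonneg ?_ (normSq_nonneg _))
    simp
    linarith
  linarith

lemma gammaRatio_re_pos (hz : 1 ≤ z.re) : 0 < (gammaRatio z).re := by
  by_contra! hneg
  have hcont : ContinuousOn (fun w => (gammaRatio w).re) {w : ℂ | 1 ≤ w.re} := fun w hw =>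
    (continuous_re.continuousAt.comp (differentiableAt_gammaRatio
      (zero_lt_one.trans_le hw)).continuousAt).continuousWithinAt
  have hone : 0 ≤ (gammaRatio 1).re := by
    rw [gammaRatio, show (1 : ℂ) + 1 / 2 = ((3 / 2 : ℝ) : ℂ) by push_cast; norm_num, Gamma_one,
      div_one, Gamma_ofReal, ofReal_re]
    exact (Real.Gamma_pos_of_pos (by norm_num)).le
  obtain ⟨w, hw, hroot⟩ := (convex_halfSpace_re_ge 1).isPreconnected.intermediate_value hz
    (by simp : (1 : ℂ) ∈ {w : ℂ | 1 ≤ w.re}) hcont ⟨hneg, hone⟩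
  exact gammaRatio_re_ne_zero hw hroot

end GammaRatio

section CriticalLine

/-- The ratio of consecutive shifts of `chi`; its norm is at most `1` on `0 ≤ re w`. -/
noncomputable def chiRatio (w : ℂ) : ℂ := chi w / chi (w + 1)

lemma norm_chiRatio_le_one {w : ℂ} (hw : 0 ≤ w.re) : ‖chiRatio w‖ ≤ 1 := by
  rw [chiRatio, norm_div]
  exact div_le_one_of_le₀ (norm_chi_le_norm_chi_add_one hw) (norm_nonneg _)

lemma chiRatio_eq {w : ℂ} (hw : 0 ≤ w.re) :
    chiRatio w = (√Real.pi : ℝ) * subOneMulZeta w *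
      (gammaRatio (w / 2 + 1) * subOneMulZeta (w + 1))⁻¹ := by
  have hsqrt : (Real.pi : ℂ) ^ (((1 / 2 : ℝ)) : ℂ) = (√Real.pi : ℝ) := by
    rw [← ofReal_cpow Real.pi_pos.le, Real.sqrt_eq_rpow]
  have h := chi_div_chi_eq (a := 1 / 2) (s := w + 1 / 2) (by simp; linarith) (by simp; linarith)
  rw [hsqrt] at h
  push_cast at h
  rw [add_sub_cancel_right, add_assoc, add_halves] at h
  rw [chiRatio, h, gammaRatio, mul_inv, inv_div]
  ring

variable {s : ℂ}

lemma Z2Half_div_normalizer_eq (hs : 1 / 2 ≤ s.re) (h1 : s ≠ 1) :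
    Z2Half s / normalizer s =
      ((A * s + 3) * ((s - 1) * (s - 1)) - 2 * (s - 1) * (s - 3) * chiRatio (s + 1)
        - ((s + 2) * (s - 3) - symmetricCoeff * (s + 1) * (1 + chiRatio (2 * s - 1)))
          * (chiRatio s * chiRatio (s + 1))) * ((A * s + 3) * (s * (s - 1)))⁻¹ := by
  have h0 : s ≠ 0 := by rintro rfl; norm_num at hs
  have hs1 : s - 1 ≠ 0 := sub_ne_zero.mpr h1
  have : s + 1 ≠ 0 := add_one_ne_zero_of_re (by linarith)
  have hD : A * s + 3 ≠ 0 := A_mul_add_three_ne_zero (by linarith)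
  have hchi1 : chi (s + 1) ≠ 0 := chi_ne_zero (by simp; linarith)
  have hchi2 : chi (s + 2) ≠ 0 := chi_ne_zero (by simp; linarith)
  have hchi : chi (2 * s) ≠ 0 := chi_ne_zero (by simp; linarith)
  have hmul := mul_Z2Half_eq s
  rw [chiRatio, chiRatio, chiRatio, normalizer, sub_add_cancel, add_assoc s 1 1,
    one_add_one_eq_two]
  generalize A * s + 3 = D at hD hmul ⊢
  field_simp
  linear_combination hmul

lemma Z2Half_div_normalizer_sub_eq (hs : 1 / 2 ≤ s.re) (h1 : s ≠ 1) :
    Z2Half s / normalizer s - (s - 1) / s =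
      -(2 * (s - 1) * (s - 3) * chiRatio (s + 1)
        + ((s + 2) * (s - 3) - symmetricCoeff * (s + 1) * (1 + chiRatio (2 * s - 1)))
          * (chiRatio s * chiRatio (s + 1))) / ((A * s + 3) * (s * (s - 1))) := by
  have h0 : s ≠ 0 := by rintro rfl; norm_num at hs
  have hs1 : s - 1 ≠ 0 := sub_ne_zero.mpr h1
  have hD : A * s + 3 ≠ 0 := A_mul_add_three_ne_zero (by linarith)
  rw [Z2Half_div_normalizer_eq hs h1]
  generalize A * s + 3 = D at hD
  field_simp
  ring

lemma norm_le_mul_norm_of_normSq_le {z w : ℂ} {c : ℝ} (hc : 0 ≤ c)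
    (h : normSq z ≤ c ^ 2 * normSq w) : ‖z‖ ≤ c * ‖w‖ := by
  rw [normSq_eq_norm_sq, normSq_eq_norm_sq, ← mul_pow] at h
  exact le_of_sq_le_sq h (by positivity)

lemma norm_symmetricCoeff_le : ‖symmetricCoeff‖ ≤ 154 / 100 := by
  have heq : symmetricCoeff = ((-(3 * Real.pi / (Real.pi + 3)) : ℝ) : ℂ) := by
    push_cast [symmetricCoeff]
    ring
  rw [heq, norm_real, norm_neg, Real.norm_of_nonneg (by positivity), div_le_iff₀ (by positivity)]
  linarith [Real.pi_lt_d4]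

lemma normSq_le_of_large (hs : s.re = 1 / 2) (ht : 25 ≤ |s.im|) : 625 ≤ normSq s := by
  rw [normSq_apply, hs, ← sq, ← sq, ← sq_abs s.im]
  nlinarith

lemma norm_A_mul_add_three_ge (hs : s.re = 1 / 2) (ht : 25 ≤ |s.im|) :
    32 / 10 ≤ ‖A * s + 3‖ := by
  have hA : 471 / 10000 ≤ Real.pi / 3 - 1 := by linarith [Real.pi_gt_d4]
  have hre : 302 / 100 ≤ (A * s + 3).re := by
    rw [A_eq_ofReal, add_re, re_ofReal_mul, hs]
    norm_num
    linarith
  have him : 117 / 100 ≤ |(A * s + 3).im| := by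
    rw [A_eq_ofReal, add_im, im_ofReal_mul, im_ofNat, add_zero, abs_mul,
      abs_of_nonneg (by linarith)]
    nlinarith
  refine le_of_sq_le_sq ?_ (norm_nonneg _)
  rw [← normSq_eq_norm_sq, normSq_apply, ← sq, ← sq, ← sq_abs (A * s + 3).im]
  nlinarith

lemma re_sub_one_div_self_ge (hs : s.re = 1 / 2) (ht : 25 ≤ |s.im|) :
    999 / 1000 ≤ ((s - 1) / s).re := by
  have hsq := normSq_le_of_large hs ht
  have h0 : s ≠ 0 := by rintro rfl; norm_num at hs
  rw [sub_div, div_self h0, sub_re, one_re, one_div, inv_re, hs]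
  have : 1 / 2 / normSq s ≤ 1 / 2 / 625 := by gcongr
  linarith

lemma norm_sub_one_of_re_eq_half (hs : s.re = 1 / 2) : ‖s - 1‖ = ‖s‖ := by
  rw [← sq_eq_sq₀ (norm_nonneg _) (norm_nonneg _), ← normSq_eq_norm_sq, ← normSq_eq_norm_sq,
    normSq_apply, normSq_apply]
  simp [hs]
  norm_num

lemma norm_add_ofReal_le_of_large (hs : s.re = 1 / 2) (ht : 25 ≤ |s.im|) {b : ℝ}
    (hb : b ^ 2 + b ≤ 6) : ‖s + b‖ ≤ 1005 / 1000 * ‖s‖ := by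
  refine norm_le_mul_norm_of_normSq_le (by norm_num) ?_
  have hexpand : normSq (s + b) = normSq s + (b ^ 2 + b) := by
    simp [normSq_apply, hs]
    ring
  linarith [normSq_le_of_large hs ht]

lemma norm_numerator_coeff_le_of_large (hs : s.re = 1 / 2) (ht : 25 ≤ |s.im|) :
    ‖(s + 2) * (s - 3) - symmetricCoeff * (s + 1) * (1 + chiRatio (2 * s - 1))‖ ≤
      114 / 100 * ‖s‖ ^ 2 := by
  have hplus1 : ‖s + 1‖ ≤ 1005 / 1000 * ‖s‖ := by
    simpa using norm_add_ofReal_le_of_large hs ht (b := 1) (by norm_num)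
  have hplus2 : ‖s + 2‖ ≤ 1005 / 1000 * ‖s‖ := by
    simpa using norm_add_ofReal_le_of_large hs ht (b := 2) (by norm_num)
  have hminus3 : ‖s - 3‖ ≤ 1005 / 1000 * ‖s‖ := by
    simpa [← sub_eq_add_neg] using norm_add_ofReal_le_of_large hs ht (b := -3) (by norm_num)
  have hratio : ‖1 + chiRatio (2 * s - 1)‖ ≤ 2 := by
    have := norm_chiRatio_le_one (w := 2 * s - 1) (by simp [hs])
    have := norm_add_le 1 (chiRatio (2 * s - 1))
    rw [norm_one] at this
    linarith
  have hnorm : 25 ≤ ‖s‖ := ht.trans (abs_im_le_norm s)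
  calc ‖(s + 2) * (s - 3) - symmetricCoeff * (s + 1) * (1 + chiRatio (2 * s - 1))‖
      ≤ ‖s + 2‖ * ‖s - 3‖ + ‖symmetricCoeff‖ * ‖s + 1‖ * ‖1 + chiRatio (2 * s - 1)‖ := by
        rw [← norm_mul, ← norm_mul, ← norm_mul]
        exact norm_sub_le _ _
    _ ≤ 1005 / 1000 * ‖s‖ * (1005 / 1000 * ‖s‖) + 154 / 100 * (1005 / 1000 * ‖s‖) * 2 := by
        gcongr
        exact norm_symmetricCoeff_le
    _ ≤ 114 / 100 * ‖s‖ ^ 2 := by nlinarith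

lemma norm_Z2Half_div_normalizer_sub_le (hs : s.re = 1 / 2) (ht : 25 ≤ |s.im|) :
    ‖Z2Half s / normalizer s - (s - 1) / s‖ ≤ 985 / 1000 := by
  have h0 : s ≠ 0 := by rintro rfl; norm_num at hs
  have h1 : s ≠ 1 := by rintro rfl; norm_num at hs
  have hD0 : A * s + 3 ≠ 0 := A_mul_add_three_ne_zero (by linarith)
  have hnorm : 0 < ‖s‖ := norm_pos_iff.mpr h0
  have hminus3 : ‖s - 3‖ ≤ 1005 / 1000 * ‖s‖ := by
    simpa [← sub_eq_add_neg] using norm_add_ofReal_le_of_large hs ht (b := -3) (by norm_num)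
  have hratio : ‖chiRatio s‖ ≤ 1 := norm_chiRatio_le_one (by linarith)
  have hratio' : ‖chiRatio (s + 1)‖ ≤ 1 := norm_chiRatio_le_one (by simp [hs]; norm_num)
  have hcoeff := norm_numerator_coeff_le_of_large hs ht
  rw [Z2Half_div_normalizer_sub_eq hs.ge h1, norm_div, norm_neg, norm_mul (A * s + 3), norm_mul s,
    norm_sub_one_of_re_eq_half hs,
    div_le_iff₀ (mul_pos (norm_pos_iff.mpr hD0) (mul_pos hnorm hnorm))]
  set coeff := (s + 2) * (s - 3) - symmetricCoeff * (s + 1) * (1 + chiRatio (2 * s - 1))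
  calc ‖2 * (s - 1) * (s - 3) * chiRatio (s + 1) + coeff * (chiRatio s * chiRatio (s + 1))‖
      ≤ 2 * ‖s - 1‖ * ‖s - 3‖ * ‖chiRatio (s + 1)‖
        + ‖coeff‖ * (‖chiRatio s‖ * ‖chiRatio (s + 1)‖) :=
        (norm_add_le _ _).trans (by simp)
    _ ≤ 2 * ‖s‖ * (1005 / 1000 * ‖s‖) * 1 + 114 / 100 * ‖s‖ ^ 2 * (1 * 1) := by
        rw [norm_sub_one_of_re_eq_half hs]
        gcongr
    _ = 985 / 1000 * (3150 / 985 * (‖s‖ * ‖s‖)) := by ring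
    _ ≤ 985 / 1000 * (‖A * s + 3‖ * (‖s‖ * ‖s‖)) := by
        gcongr
        linarith [norm_A_mul_add_three_ge hs ht]

lemma re_Z2Half_div_normalizer_ge_of_large (hs : s.re = 1 / 2) (ht : 25 ≤ |s.im|) :
    1 / 100 ≤ (Z2Half s / normalizer s).re := by
  have hlead := re_sub_one_div_self_ge hs ht
  have herror := (abs_re_le_norm _).trans (norm_Z2Half_div_normalizer_sub_le hs ht)
  rw [sub_re] at herror
  linarith [(abs_le.mp herror).1]

end CriticalLine

section FixedPoint

/-- The unit of the fixed-point arithmetic below: an integer `n` stands for `n / scale`. -/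
def scale : ℕ := 2 ^ 32

/-- Division by `scale` of a Gaussian integer, rounding both coordinates down. -/
def roundDown (z : GaussianInt) : GaussianInt := ⟨z.re / scale, z.im / scale⟩

/-- One step of Newton's iteration for the integer square root of `n`. -/
def newtonStep (n c : ℕ) : ℕ := (c + n / c) / 2

/-- An upper bound for the norm of a Gaussian integer, obtained from one Newton step. -/
def normBound (z : GaussianInt) : ℕ :=
  newtonStep (z.re.natAbs ^ 2 + z.im.natAbs ^ 2)
    (max z.re.natAbs z.im.natAbs + min z.re.natAbs z.im.natAbs / 2 + 1) + 1

/-- The quotient of two Gaussian integers in units of `scale`; nothing is claimed about its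
accuracy, which is certified a posteriori wherever it is used. -/
def approxDiv (a b : GaussianInt) : GaussianInt :=
  ⟨(a * star b).re * scale / b.norm, (a * star b).im * scale / b.norm⟩

lemma scale_pos : (0 : ℝ) < scale := by norm_num [scale]

lemma scale_ne_zero : (scale : ℂ) ≠ 0 := by norm_num [scale]

lemma abs_intCast_ediv_sub_le_one (a : ℤ) (n : ℕ) : |((a / n : ℤ) : ℝ) - a / n| ≤ 1 := by
  have hfloor : ⌊(a : ℝ) / n⌋ = a / n := by rw [Int.floor_div_natCast, Int.floor_intCast]
  rw [← hfloor, abs_le]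
  constructor <;> linarith [Int.floor_le ((a : ℝ) / n), Int.lt_floor_add_one ((a : ℝ) / n)]

lemma norm_roundDown_sub_le (z : GaussianInt) : ‖(roundDown z : ℂ) - z / scale‖ ≤ 2 := by
  have hre : ((roundDown z : ℂ) - z / scale).re = ((z.re / scale : ℤ) : ℝ) - z.re / scale := by
    simp [roundDown, div_natCast_re]
  have him : ((roundDown z : ℂ) - z / scale).im = ((z.im / scale : ℤ) : ℝ) - z.im / scale := by
    simp [roundDown, div_natCast_im]
  refine (norm_le_abs_re_add_abs_im _).trans ?_
  rw [hre, him]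
  linarith [abs_intCast_ediv_sub_le_one z.re scale, abs_intCast_ediv_sub_le_one z.im scale]

lemma le_sq_newtonStep_add_one (n : ℕ) {c : ℕ} (hc : 0 < c) : n ≤ (newtonStep n c + 1) ^ 2 := by
  have hquot : n < c * (n / c + 1) := Nat.lt_mul_div_succ n hc
  have hhalf : c + n / c + 1 ≤ 2 * (newtonStep n c + 1) := by
    rw [newtonStep]
    lia
  have hamgm : 4 * c * (n / c + 1) ≤ (c + (n / c + 1)) ^ 2 := four_mul_le_sq_add c (n / c + 1)
  nlinarith [Nat.pow_le_pow_left hhalf 2]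

lemma norm_le_normBound (z : GaussianInt) : ‖(z : ℂ)‖ ≤ normBound z := by
  refine le_of_sq_le_sq ?_ (Nat.cast_nonneg _)
  have hsq : ‖(z : ℂ)‖ ^ 2 = ((z.re.natAbs ^ 2 + z.im.natAbs ^ 2 : ℕ) : ℝ) := by
    rw [← normSq_eq_norm_sq, normSq_apply, ← sq, ← sq]
    simp [Nat.cast_natAbs]
  rw [hsq]
  exact_mod_cast le_sq_newtonStep_add_one _ (Nat.succ_pos _)

end FixedPoint

/-- A disc-valued affine function of a parameter `τ ∈ [-1, 1]`: `jet c d r` is the disc with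
centre `(c + d * τ) / scale` and radius `r / scale`, and `unknown` is the whole plane. -/
inductive Enclosure
  | unknown
  | jet (center slope : GaussianInt) (radius : ℕ)

namespace Enclosure

/-- Membership of a complex number in the disc at parameter `τ`. -/
def Encloses (τ : ℝ) : Enclosure → ℂ → Prop
  | unknown, _ => True
  | jet c d r, z => ‖scale * z - (c + d * τ)‖ ≤ r

instance (n : ℕ) : OfNat Enclosure n := ⟨jet ⟨n * scale, 0⟩ 0 0⟩

/-- An enclosure of `1 / q`. -/
def recip (q : ℕ) : Enclosure := jet ⟨scale / q, 0⟩ 0 1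

/-- Enlarges the radius. -/
def widen : Enclosure → ℕ → Enclosure
  | unknown, _ => unknown
  | jet c d r, r' => jet c d (r + r')

/-- Passes to `k` an upper bound, in units of `scale`, for the norms of the enclosed numbers. -/
def bindBound : Enclosure → (ℕ → Enclosure) → Enclosure
  | unknown, _ => unknown
  | jet c d r, k => k (normBound c + normBound d + r)

/-- Enlarges the radius of `E` by `1 / q` times the norm of anything enclosed by `F`. -/
def blur (E F : Enclosure) (q : ℕ) : Enclosure := F.bindBound fun b => E.widen (b / q + 1)

instance : Neg Enclosure where
  neg
    | unknown => unknown
    | jet c d r => jet (-c) (-d) r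

instance : Add Enclosure where
  add
    | jet c d r, jet c' d' r' => jet (c + c') (d + d') (r + r')
    | _, _ => unknown

instance : Sub Enclosure := ⟨fun E F => E + -F⟩

instance : Mul Enclosure where
  mul
    | jet c d r, jet c' d' r' => jet (roundDown (c * c')) (roundDown (c * d' + d * c'))
        ((normBound c * r' + normBound c' * r +
          (normBound d + r) * (normBound d' + r')) / scale + 5)
    | _, _ => unknown

/-- Turns an approximate inverse `G` of `E` into an enclosure of the inverse. -/
def certifyInv (E G : Enclosure) : Enclosure :=
  (1 - E * G).bindBound fun ε =>
    if ε < scale then G.bindBound fun b => G.widen (b * ε / (scale - ε) + 1) else unknown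

instance : Inv Enclosure where
  inv
    | unknown => unknown
    | jet c d r =>
      let q := approxDiv scale c
      certifyInv (jet c d r) (jet q (-roundDown (roundDown (q * q) * d)) 0)

/-- Turns an approximate square root `q + d * τ` of `E` with positive real part into an enclosure
of the square root. -/
def certifySqrt (E : Enclosure) (q d : GaussianInt) : Enclosure :=
  (E - jet q d 0 * jet q d 0).bindBound fun b =>
    if normBound d < q.re then (jet q d 0).widen (b * scale / (q.re - normBound d).toNat + 1)
    else unknown

/-- An enclosure of the principal square root. -/
def sqrt : Enclosure → Enclosure
  | unknown => unknown
  | jet c d r =>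
    let p := (newtonStep ((normBound c + c.re) / 2 * scale).toNat)^[5] (3 * scale)
    let q : GaussianInt := ⟨p, c.im * scale / (2 * p)⟩
    certifySqrt (jet c d r) q (approxDiv d (2 * q))

/-- Horner's scheme for `∑ m ≤ n, k! / (k + m)! * z ^ m`. -/
def expHorner (E : Enclosure) : ℕ → ℕ → Enclosure
  | _, 0 => 1
  | k, n + 1 => 1 + E * recip (k + 1) * expHorner E (k + 1) n

/-- An enclosure of `exp z` for `‖z‖ ≤ 1`, from the Taylor polynomial of degree `7`. -/
def expSmall (E : Enclosure) : Enclosure :=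
  E.bindBound fun b =>
    if b ≤ scale then (expHorner E 0 7).widen (b ^ 8 * 9 / (322560 * scale ^ 7) + 1) else unknown

/-- An enclosure of `exp z`, by squaring an enclosure of `exp (z / 64)` six times. -/
def exp (E : Enclosure) : Enclosure := (fun F => F * F)^[6] (E * recip 64).expSmall

variable {τ : ℝ} {E F : Enclosure} {z w : ℂ}

lemma encloses_jet {c d : GaussianInt} {r : ℕ} :
    (jet c d r).Encloses τ z ↔ ‖scale * z - (c + d * τ)‖ ≤ r := Iff.rfl

lemma encloses_jet_div_scale (τ : ℝ) (c d : GaussianInt) :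
    (jet c d 0).Encloses τ ((c + d * τ) / scale) := by
  simp [encloses_jet, mul_div_cancel₀ _ scale_ne_zero]

lemma encloses_ofNat (τ : ℝ) (n : ℕ) : (OfNat.ofNat n : Enclosure).Encloses τ n := by
  change ‖(scale : ℂ) * n - ((⟨n * scale, 0⟩ : GaussianInt) + (0 : GaussianInt) * τ)‖ ≤ (0 : ℕ)
  simp [GaussianInt.toComplex_def', mul_comm]

lemma encloses_one (τ : ℝ) : (1 : Enclosure).Encloses τ 1 := by
  simpa using encloses_ofNat τ 1

lemma encloses_two (τ : ℝ) : (2 : Enclosure).Encloses τ 2 := encloses_ofNat τ 2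

lemma encloses_recip (τ : ℝ) (q : ℕ) : (recip q).Encloses τ (q : ℂ)⁻¹ := by
  have h := abs_intCast_ediv_sub_le_one scale q
  rw [abs_sub_comm, Int.cast_natCast] at h
  rw [recip, encloses_jet, GaussianInt.toComplex_def']
  simpa [← div_eq_mul_inv, ← ofReal_natCast, ← ofReal_intCast, ← ofReal_div, ← ofReal_sub] using h

lemma Encloses.widen {r : ℕ} (hE : E.Encloses τ z) (hw : scale * ‖w - z‖ ≤ r) :
    (E.widen r).Encloses τ w := by
  cases E with
  | unknown => trivial
  | jet c d r₀ =>
    rw [encloses_jet] at hE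
    have hdiff : ‖(scale : ℂ) * (w - z)‖ ≤ r := by simpa using hw
    rw [Enclosure.widen, encloses_jet, Nat.cast_add]
    calc ‖(scale : ℂ) * w - (c + d * τ)‖
        = ‖(scale * z - (c + d * τ)) + scale * (w - z)‖ := by ring_nf
      _ ≤ r₀ + r := norm_add_le_of_le hE hdiff

lemma norm_mul_ofReal_le {D : ℝ} (hτ : |τ| ≤ 1) (hz : ‖z‖ ≤ D) : ‖z * τ‖ ≤ D := by
  rw [norm_mul, norm_real]
  exact (mul_le_of_le_one_right (norm_nonneg _) hτ).trans hz

lemma Encloses.bindBound {k : ℕ → Enclosure} (hτ : |τ| ≤ 1) (hE : E.Encloses τ z)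
    (hk : ∀ b : ℕ, scale * ‖z‖ ≤ b → (k b).Encloses τ w) : (E.bindBound k).Encloses τ w := by
  cases E with
  | unknown => trivial
  | jet c d r =>
    refine hk _ ?_
    rw [encloses_jet] at hE
    have hd : ‖(d : ℂ) * τ‖ ≤ normBound d := norm_mul_ofReal_le hτ (norm_le_normBound d)
    push_cast
    calc scale * ‖z‖ = ‖(c : ℂ) + d * τ + (scale * z - (c + d * τ))‖ := by simp
      _ ≤ normBound c + normBound d + r :=
        norm_add_le_of_le (norm_add_le_of_le (norm_le_normBound c) hd) hE

lemma le_natCast_div_add_one {x : ℝ} {a q : ℕ} (hx : x ≤ a / q) :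
    x ≤ (a / q + 1 : ℕ) := by
  have hfloor : ⌊(a : ℝ) / q⌋₊ = a / q := Nat.floor_div_eq_div a q
  rw [← hfloor]
  push_cast
  exact hx.trans (Nat.lt_floor_add_one _).le

lemma Encloses.blur {q : ℕ} {v : ℂ} (hτ : |τ| ≤ 1) (hE : E.Encloses τ z) (hF : F.Encloses τ v)
    (hw : ‖w - z‖ ≤ ‖v‖ / q) : (E.blur F q).Encloses τ w :=
  hF.bindBound hτ fun b hb => hE.widen <| le_natCast_div_add_one <| by
    calc scale * ‖w - z‖ ≤ scale * (‖v‖ / q) := by gcongr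
      _ = scale * ‖v‖ / q := by ring
      _ ≤ b / q := by gcongr

lemma Encloses.neg (hE : E.Encloses τ z) : (-E).Encloses τ (-z) := by
  cases E with
  | unknown => trivial
  | jet c d r =>
    change ‖(scale : ℂ) * -z - ((-c : GaussianInt) + (-d : GaussianInt) * τ)‖ ≤ r
    rw [encloses_jet, ← norm_neg] at hE
    refine (congrArg norm ?_).trans_le hE
    rw [map_neg, map_neg]
    ring

lemma Encloses.add (hE : E.Encloses τ z) (hF : F.Encloses τ w) : (E + F).Encloses τ (z + w) := by
  rcases E with _ | ⟨c, d, r⟩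
  · trivial
  rcases F with _ | ⟨c', d', r'⟩
  · trivial
  change ‖(scale : ℂ) * (z + w) - ((c + c' : GaussianInt) + (d + d' : GaussianInt) * τ)‖
    ≤ (r + r' : ℕ)
  rw [encloses_jet] at hE hF
  rw [Nat.cast_add, map_add, map_add]
  refine (congrArg norm ?_).trans_le (norm_add_le_of_le hE hF)
  ring

lemma Encloses.sub (hE : E.Encloses τ z) (hF : F.Encloses τ w) : (E - F).Encloses τ (z - w) := by
  rw [sub_eq_add_neg z w]
  exact hE.add hF.neg

lemma norm_scale_mul_mul_sub_le {c d c' d' e e' : ℂ} {C D C' D' r r' : ℝ} (hτ : |τ| ≤ 1)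
    (hc : ‖c‖ ≤ C) (hd : ‖d‖ ≤ D) (hc' : ‖c'‖ ≤ C') (hd' : ‖d'‖ ≤ D')
    (he : ‖e‖ ≤ r) (he' : ‖e'‖ ≤ r') :
    ‖(c + d * τ + e) * (c' + d' * τ + e') - (c * c' + (c * d' + d * c') * τ)‖ ≤
      C * r' + C' * r + (D + r) * (D' + r') := by
  have hC := (norm_nonneg _).trans hc
  have hC' := (norm_nonneg _).trans hc'
  have hvar := norm_add_le_of_le (norm_mul_ofReal_le hτ hd) he
  have hvar' := norm_add_le_of_le (norm_mul_ofReal_le hτ hd') he'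
  calc ‖(c + d * τ + e) * (c' + d' * τ + e') - (c * c' + (c * d' + d * c') * τ)‖
      = ‖c * e' + c' * e + (d * τ + e) * (d' * τ + e')‖ := by ring_nf
    _ ≤ ‖c‖ * ‖e'‖ + ‖c'‖ * ‖e‖ + ‖d * τ + e‖ * ‖d' * τ + e'‖ := by
      rw [← norm_mul, ← norm_mul, ← norm_mul]
      exact norm_add₃_le
    _ ≤ C * r' + C' * r + (D + r) * (D' + r') := by
      have := (norm_nonneg _).trans hvar
      gcongr

lemma Encloses.mul (hτ : |τ| ≤ 1) (hE : E.Encloses τ z) (hF : F.Encloses τ w) :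
    (E * F).Encloses τ (z * w) := by
  rcases E with _ | ⟨c, d, r⟩
  · trivial
  rcases F with _ | ⟨c', d', r'⟩
  · trivial
  set R := normBound c * r' + normBound c' * r + (normBound d + r) * (normBound d' + r')
  change ‖(scale : ℂ) * (z * w) - (roundDown (c * c') + roundDown (c * d' + d * c') * τ)‖
    ≤ (R / scale + 5 : ℕ)
  have hexact : ‖(scale * z) * (scale * w) - (c * c' + (c * d' + d * c') * τ)‖ ≤ R := by
    have := norm_scale_mul_mul_sub_le hτ (norm_le_normBound c) (norm_le_normBound d)
      (norm_le_normBound c') (norm_le_normBound d') hE hF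
    simpa [R] using this
  have hquot : ‖((scale * z) * (scale * w) - (c * c' + (c * d' + d * c') * τ)) / scale‖
      ≤ (R / scale + 1 : ℕ) := by
    refine le_natCast_div_add_one ?_
    rw [norm_div, norm_natCast]
    gcongr
  have hcenter := norm_roundDown_sub_le (c * c')
  have hslope : ‖((roundDown (c * d' + d * c') : ℂ)
      - (c * d' + d * c' : GaussianInt) / scale) * τ‖ ≤ 2 :=
    norm_mul_ofReal_le hτ (norm_roundDown_sub_le _)
  simp only [map_add, map_mul] at hcenter hslope
  push_cast at hquot ⊢
  refine (congrArg norm ?_).trans_le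
    ((norm_sub_le_of_le (norm_sub_le_of_le hquot hcenter) hslope).trans (by linarith))
  have hscale := scale_ne_zero
  field_simp
  ring

lemma norm_inv_sub_le {g : ℂ} {ε : ℝ} (hε : ‖1 - z * g‖ ≤ ε) (hε1 : ε < 1) :
    ‖z⁻¹ - g‖ ≤ ‖g‖ * ε / (1 - ε) := by
  have hlower : 1 - ε ≤ ‖z * g‖ := by
    have := norm_sub_norm_le 1 (z * g)
    rw [norm_one] at this
    linarith
  have hne : z * g ≠ 0 := norm_pos_iff.mp (by linarith)
  have heq : z⁻¹ - g = g * (1 - z * g) / (z * g) := by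
    have := left_ne_zero_of_mul hne
    have := right_ne_zero_of_mul hne
    field_simp
  rw [heq, norm_div, norm_mul]
  have : 0 < 1 - ε := by linarith
  have := (norm_nonneg _).trans hε
  gcongr

lemma Encloses.certifyInv {G : Enclosure} {g : ℂ} (hτ : |τ| ≤ 1) (hE : E.Encloses τ z)
    (hG : G.Encloses τ g) : (certifyInv E G).Encloses τ z⁻¹ := by
  refine ((encloses_one τ).sub (hE.mul hτ hG)).bindBound hτ fun ε hε => ?_
  split_ifs with hlt
  · refine hG.bindBound hτ fun b hb => hG.widen <| le_natCast_div_add_one ?_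
    have hpos := scale_pos
    have hlt' : (ε : ℝ) < scale := by exact_mod_cast hlt
    have hinv := norm_inv_sub_le (z := z) (g := g) (ε := ε / scale)
      ((le_div_iff₀' hpos).mpr hε) ((div_lt_one hpos).mpr hlt')
    push_cast [Nat.cast_sub hlt.le]
    have hdiff : 0 < (scale : ℝ) - ε := by linarith
    calc scale * ‖z⁻¹ - g‖ ≤ scale * (‖g‖ * (ε / scale) / (1 - ε / scale)) := by gcongr
      _ = scale * ‖g‖ * ε / (scale - ε) := by field_simp
      _ ≤ b * ε / (scale - ε) := by gcongr
  · trivial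

lemma Encloses.inv (hτ : |τ| ≤ 1) (hE : E.Encloses τ z) : E⁻¹.Encloses τ z⁻¹ := by
  cases E with
  | unknown => trivial
  | jet c d r => exact hE.certifyInv hτ (encloses_jet_div_scale τ _ _)

lemma norm_sub_le_of_re_pos {g : ℂ} {l : ℝ} (hz : 0 ≤ z.re) (hl : 0 < l) (hg : l ≤ g.re) :
    ‖z - g‖ ≤ ‖z ^ 2 - g ^ 2‖ / l := by
  rw [le_div_iff₀ hl]
  have hlower : l ≤ ‖z + g‖ := (by simpa using by linarith : l ≤ (z + g).re).trans (re_le_norm _)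
  calc ‖z - g‖ * l ≤ ‖z - g‖ * ‖z + g‖ := by gcongr
    _ = ‖z ^ 2 - g ^ 2‖ := by rw [← norm_mul]; ring_nf

lemma Encloses.certifySqrt (hτ : |τ| ≤ 1) (hE : E.Encloses τ (z ^ 2)) (hz : 0 ≤ z.re)
    (q d : GaussianInt) : (certifySqrt E q d).Encloses τ z := by
  have hjet := encloses_jet_div_scale τ q d
  set g : ℂ := (q + d * τ) / scale
  refine (hE.sub (hjet.mul hτ hjet)).bindBound hτ fun b hb => ?_
  split_ifs with hlt
  · refine hjet.widen <| le_natCast_div_add_one ?_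
    have hpos := scale_pos
    set l : ℝ := q.re - normBound d
    have hl : 0 < l := sub_pos.mpr (by exact_mod_cast hlt)
    have hcast : (((q.re - normBound d).toNat : ℕ) : ℝ) = l := by
      rw [← Int.cast_natCast, Int.toNat_of_nonneg (by lia)]
      push_cast
      rfl
    have hslope : -(normBound d : ℝ) ≤ ((d : ℂ) * τ).re := neg_le_of_abs_le
      ((abs_re_le_norm _).trans (norm_mul_ofReal_le hτ (norm_le_normBound d)))
    have hg : l / scale ≤ g.re := by
      rw [div_natCast_re, add_re, ← GaussianInt.intCast_re]
      gcongr
      linarith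
    rw [← sq] at hb
    push_cast [hcast]
    calc scale * ‖z - g‖ ≤ scale * (‖z ^ 2 - g ^ 2‖ / (l / scale)) := by
          gcongr
          exact norm_sub_le_of_re_pos hz (by positivity) hg
      _ = scale * ‖z ^ 2 - g ^ 2‖ * scale / l := by field_simp
      _ ≤ b * scale / l := by gcongr
  · trivial

lemma Encloses.sqrt (hτ : |τ| ≤ 1) (hE : E.Encloses τ (z ^ 2)) (hz : 0 ≤ z.re) :
    E.sqrt.Encloses τ z := by
  cases E with
  | unknown => trivial
  | jet c d r => exact hE.certifySqrt hτ hz _ _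

lemma Encloses.expHorner (hτ : |τ| ≤ 1) (hE : E.Encloses τ z) (k n : ℕ) :
    (E.expHorner k n).Encloses τ
      (∑ m ∈ Finset.range (n + 1), z ^ m * (k.factorial / (k + m).factorial)) := by
  induction n generalizing k with
  | zero => simpa [Enclosure.expHorner, Nat.factorial_ne_zero] using encloses_one τ
  | succ n ih =>
    have hstep := (encloses_one τ).add ((hE.mul hτ (encloses_recip τ (k + 1))).mul hτ (ih (k + 1)))
    rw [Enclosure.expHorner]
    convert hstep using 1
    rw [Finset.sum_range_succ', add_comm, Finset.mul_sum]
    congr 1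
    · simp [Nat.factorial_ne_zero]
    · refine Finset.sum_congr rfl fun m _ => ?_
      rw [Nat.factorial_succ k, add_right_comm k 1 m, ← add_assoc]
      push_cast
      have : (k : ℂ) + 1 ≠ 0 := by exact_mod_cast k.succ_ne_zero
      field_simp
      ring

lemma Encloses.expSmall (hτ : |τ| ≤ 1) (hE : E.Encloses τ z) :
    E.expSmall.Encloses τ (Complex.exp z) := by
  refine hE.bindBound hτ fun b hb => ?_
  split_ifs with hle
  · have hpos := scale_pos
    have hb' : ‖z‖ ≤ b / scale := (le_div_iff₀' hpos).mpr hb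
    have hz : ‖z‖ ≤ 1 := hb'.trans ((div_le_one hpos).mpr (by exact_mod_cast hle))
    refine (hE.expHorner hτ 0 7).widen <| le_natCast_div_add_one ?_
    have htaylor := exp_bound hz (n := 8) (by norm_num)
    have hsum : ∑ m ∈ Finset.range (7 + 1), z ^ m * ((0).factorial / (0 + m).factorial) =
        ∑ m ∈ Finset.range 8, z ^ m / m.factorial := by simp [div_eq_mul_inv]
    rw [hsum]
    push_cast
    calc scale * ‖Complex.exp z - ∑ m ∈ Finset.range 8, z ^ m / m.factorial‖
        ≤ scale * ((b / scale) ^ 8 * (9 / 322560)) := by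
          gcongr
          refine htaylor.trans ?_
          gcongr
          norm_num [Nat.factorial]
      _ = b ^ 8 * 9 / (322560 * scale ^ 7) := by field_simp
  · trivial

lemma Encloses.iterate_mul_self (hτ : |τ| ≤ 1) (hE : E.Encloses τ z) (n : ℕ) :
    ((fun F => F * F)^[n] E).Encloses τ (z ^ 2 ^ n) := by
  induction n with
  | zero => simpa using hE
  | succ n ih =>
    rw [Function.iterate_succ_apply', pow_succ, pow_mul, sq]
    exact ih.mul hτ ih

lemma Encloses.exp (hτ : |τ| ≤ 1) (hE : E.Encloses τ z) : E.exp.Encloses τ (Complex.exp z) := by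
  have := ((hE.mul hτ (encloses_recip τ 64)).expSmall hτ).iterate_mul_self hτ 6
  have hcancel : ((2 ^ 6 : ℕ) : ℂ) * (z * ((64 : ℕ) : ℂ)⁻¹) = z := by
    push_cast
    ring
  rwa [← exp_nat_mul, hcancel] at this

/-- An enclosure of `π`. -/
def pi : Enclosure := jet ⟨13493037704, 0⟩ 0 1

/-- An enclosure of `log 2`. -/
def logTwo : Enclosure := jet ⟨2977044472, 0⟩ 0 2

/-- An enclosure of `log 3`. -/
def logThree : Enclosure := jet ⟨4718503851, 0⟩ 0 2

/-- An enclosure of `subOneMulZeta w` for `2 * re w = k`, computed by Euler–Maclaurin summation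
with `N = 4`; `P` and `Q` enclose `2 ^ (-w)` and `3 ^ (-w)`. -/
def ofSubOneMulZeta (W P Q : Enclosure) (k : ℕ) : Enclosure :=
  ((W - 1) * (1 + P + Q + P * P * (recip 2 + W * recip 48)) + 4 * (P * P)).blur
    ((W - 1) * (W * (W + 1) * (W + 2))) (60 * (k + 4) * 2 ^ (k + 4))

/-- An enclosure of `gammaRatio z` for `6 ≤ re z + n`, from the asymptotic
`gammaRatio z ^ 2 ≈ z - 1 / 4` after `n` shifts to the right. -/
def ofGammaRatio (Z : Enclosure) : ℕ → Enclosure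
  | 0 => ((Z - recip 4).blur (Z - recip 4) 881).sqrt
  | n + 1 => ofGammaRatio (Z + 1) n * (1 - (2 * Z + 1)⁻¹)

/-- An enclosure of `chiRatio w`; the arguments are those of `ofSubOneMulZeta`. -/
def ofChiRatio (W P Q : Enclosure) (k : ℕ) : Enclosure :=
  pi.sqrt * ofSubOneMulZeta W P Q k * (ofGammaRatio (W * recip 2 + 1) 5 *
    ofSubOneMulZeta (W + 1) (P * recip 2) (Q * recip 3) (k + 2))⁻¹

/-- An enclosure of `Z2Half s / normalizer s` from enclosures of `s`, `chiRatio s`,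
`chiRatio (s + 1)` and `chiRatio (2 * s - 1)`. -/
def ofZ2HalfDivNormalizer (S R R' R'' : Enclosure) : Enclosure :=
  let D := (pi * recip 3 - 1) * S + 3
  (D * ((S - 1) * (S - 1)) - 2 * (S - 1) * (S - 3) * R'
    - ((S + 2) * (S - 3) - -(3 * pi * (pi + 3)⁻¹) * (S + 1) * (1 + R'')) * (R * R'))
    * (D * (S * (S - 1)))⁻¹

/-- The segment of the critical line with imaginary parts `(t + h * τ) / scale`. -/
def segment (t h : ℕ) : Enclosure := jet ⟨scale / 2, t⟩ ⟨0, h⟩ 0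

/-- An enclosure of `Z2Half s / normalizer s` for `s` in `segment t h`. From `t = 6 * scale` on the
bound `‖chiRatio (2 * s - 1)‖ ≤ 1` is precise enough. -/
def ofSegment (t h : ℕ) : Enclosure :=
  let S := segment t h
  let P := exp (-(logTwo * S))
  let Q := exp (-(logThree * S))
  ofZ2HalfDivNormalizer S (ofChiRatio S P Q 1)
    (ofChiRatio (S + 1) (P * recip 2) (Q * recip 3) 3)
    (if t < 6 * scale then ofChiRatio (2 * S - 1) (2 * (P * P)) (3 * (Q * Q)) 0
      else jet 0 0 scale)

/-- Whether all enclosed numbers visibly have real part at least `1 / 100`. -/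
def reGe : Enclosure → Bool
  | unknown => false
  | jet c d r => scale + 100 * (normBound d + r) ≤ 100 * c.re

/-- Whether `reGe` holds on consecutive segments with half-lengths `hs` which cover the imaginary
parts from `t / scale` to `25`. -/
def coverCheck : ℕ → List ℕ → Bool
  | t, [] => 25 * scale ≤ t
  | t, h :: hs => (ofSegment (t + h) h).reGe && coverCheck (t + 2 * h) hs

variable {W P Q Z : Enclosure} {s : ℂ}

lemma encloses_three (τ : ℝ) : (3 : Enclosure).Encloses τ 3 := encloses_ofNat τ 3

lemma encloses_ofReal {x : ℝ} {n : ℤ} {r : ℕ} (hx : |scale * x - n| ≤ r) :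
    (jet ⟨n, 0⟩ 0 r).Encloses τ x := by
  rw [encloses_jet, GaussianInt.toComplex_def']
  simpa [← ofReal_natCast, ← ofReal_intCast, ← ofReal_mul, ← ofReal_sub] using hx

lemma encloses_pi : pi.Encloses τ Real.pi := by
  refine encloses_ofReal ?_
  rw [abs_le]
  constructor <;> norm_num [scale] <;> linarith [Real.pi_gt_d20, Real.pi_lt_d20]

lemma encloses_logTwo : logTwo.Encloses τ (Real.log 2) := by
  refine encloses_ofReal ?_
  rw [abs_le]
  constructor <;> norm_num [scale] <;> linarith [Real.log_two_gt_d9, Real.log_two_lt_d9]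

lemma encloses_logThree : logThree.Encloses τ (Real.log 3) := by
  refine encloses_ofReal ?_
  rw [abs_le]
  constructor <;> norm_num [scale] <;> linarith [Real.log_three_gt_d9, Real.log_three_lt_d9]

lemma encloses_sqrt_pi (hτ : |τ| ≤ 1) : pi.sqrt.Encloses τ (√Real.pi : ℝ) := by
  refine Encloses.sqrt hτ ?_ (by simp)
  rw [← ofReal_pow, Real.sq_sqrt Real.pi_pos.le]
  exact encloses_pi

lemma Encloses.exp_neg_log_mul {x : ℝ} {L : Enclosure} (hτ : |τ| ≤ 1) (hx : 0 < x)
    (hL : L.Encloses τ (Real.log x)) (hW : W.Encloses τ w) :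
    (Enclosure.exp (-(L * W))).Encloses τ ((x : ℂ) ^ (-w)) := by
  rw [cpow_def_of_ne_zero (by exact_mod_cast hx.ne'), ← ofReal_log hx.le, mul_neg]
  exact (hL.mul hτ hW).neg.exp hτ

lemma subOneMulZetaApprox_four (w : ℂ) :
    subOneMulZetaApprox 4 w =
      (w - 1) * (1 + 2 ^ (-w) + 3 ^ (-w) + 2 ^ (-w) * 2 ^ (-w) * (2⁻¹ + w * 48⁻¹))
        + 4 * (2 ^ (-w) * 2 ^ (-w)) := by
  have hfour : (4 : ℂ) ^ (-w) = 2 ^ (-w) * 2 ^ (-w) := by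
    have := natCast_mul_natCast_cpow 2 2 (-w)
    norm_num at this
    exact this
  rw [subOneMulZetaApprox, show Finset.Ico 1 4 = {1, 2, 3} from rfl]
  simp only [Nat.cast_ofNat, sub_eq_add_neg (1 : ℂ), sub_eq_add_neg (-w),
    cpow_add _ _ (by norm_num : (4 : ℂ) ≠ 0), hfour, cpow_one, cpow_neg_one]
  simp
  ring

lemma Encloses.ofSubOneMulZeta {k : ℕ} (hτ : |τ| ≤ 1) (hW : W.Encloses τ w)
    (hP : P.Encloses τ (2 ^ (-w))) (hQ : Q.Encloses τ (3 ^ (-w))) (hk : 2 * w.re = k) :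
    (Enclosure.ofSubOneMulZeta W P Q k).Encloses τ (subOneMulZeta w) := by
  have hre : w.re = k / 2 := by linarith
  have h1 := encloses_one τ
  refine Encloses.blur (z := subOneMulZetaApprox 4 w)
    (v := (w - 1) * (w * (w + 1) * (w + 2))) hτ ?_ ?_ ?_
  · rw [subOneMulZetaApprox_four]
    exact ((hW.sub h1).mul hτ (((h1.add hP).add hQ).add ((hP.mul hτ hP).mul hτ
      ((encloses_recip τ 2).add (hW.mul hτ (encloses_recip τ 48)))))).add
      ((encloses_ofNat τ 4).mul hτ (hP.mul hτ hP))
  · exact (hW.sub h1).mul hτ ((hW.mul hτ (hW.add h1)).mul hτ (hW.add (encloses_two τ)))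
  · refine (norm_subOneMulZeta_sub_approx_le (N := 4) (by norm_num) ?_).trans_eq ?_
    · rw [hre]
      linarith [k.cast_nonneg (α := ℝ)]
    · have hpow : ((4 : ℕ) : ℝ) ^ (-w.re - 2) = (2 ^ (k + 4))⁻¹ := by
        rw [show ((4 : ℕ) : ℝ) = 2 ^ (2 : ℝ) by norm_num, ← Real.rpow_mul (by norm_num),
          ← Real.rpow_natCast, ← Real.rpow_neg (by norm_num), hre]
        push_cast
        ring_nf
      rw [hpow, hre]
      push_cast
      field_simp
      ring

lemma norm_gammaRatio_sq_sub_le (hz : 6 ≤ z.re) :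
    ‖gammaRatio z ^ 2 - (z - 4⁻¹)‖ ≤ ‖z - 4⁻¹‖ / (881 : ℕ) := by
  have hne : z - 4⁻¹ ≠ 0 := fun h => by
    have := congrArg re h
    simp at this
    linarith
  have hrel := (norm_sq_gammaRatio_div_sub_one_lt (z := z) (by linarith)).le
  rw [one_div (4 : ℂ)] at hrel
  have heq : gammaRatio z ^ 2 - (z - 4⁻¹) = (z - 4⁻¹) * (gammaRatio z ^ 2 / (z - 4⁻¹) - 1) := by
    rw [mul_sub, mul_div_cancel₀ _ hne, mul_one]
  rw [heq, norm_mul, div_eq_mul_inv ‖_‖]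
  gcongr
  refine hrel.trans ?_
  rw [one_div]
  refine inv_anti₀ (by norm_num) ?_
  push_cast
  nlinarith

lemma Encloses.ofGammaRatio (hτ : |τ| ≤ 1) (hZ : Z.Encloses τ z) (n : ℕ) (hz : 0 < z.re)
    (hn : 6 ≤ z.re + n) : (Enclosure.ofGammaRatio Z n).Encloses τ (gammaRatio z) := by
  induction n generalizing Z z with
  | zero =>
    rw [Nat.cast_zero, add_zero] at hn
    have hshift := hZ.sub (encloses_recip τ 4)
    exact (hshift.blur hτ hshift (by exact_mod_cast norm_gammaRatio_sq_sub_le hn)).sqrt hτ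
      (gammaRatio_re_pos (by linarith)).le
  | succ n ih =>
    have h1 := encloses_one τ
    rw [gammaRatio_eq_mul hz]
    refine (ih (hZ.add h1) ?_ ?_).mul hτ
      (h1.sub ((((encloses_two τ).mul hτ hZ).add h1).inv hτ))
    · simp
      linarith
    · push_cast at hn
      simp
      linarith

lemma natCast_cpow_neg_add_one {n : ℕ} (hn : n ≠ 0) (w : ℂ) :
    (n : ℂ) ^ (-(w + 1)) = n ^ (-w) * (n : ℂ)⁻¹ := by
  rw [neg_add, cpow_add _ _ (by exact_mod_cast hn), cpow_neg_one]

lemma Encloses.natCast_cpow_shift {n : ℕ} (hn : n ≠ 0) (hτ : |τ| ≤ 1)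
    (hP : P.Encloses τ ((n : ℂ) ^ (-w))) :
    (P * recip n).Encloses τ ((n : ℂ) ^ (-(w + 1))) := by
  rw [natCast_cpow_neg_add_one hn]
  exact hP.mul hτ (encloses_recip τ n)

lemma Encloses.ofChiRatio {k : ℕ} (hτ : |τ| ≤ 1) (hW : W.Encloses τ w)
    (hP : P.Encloses τ (2 ^ (-w))) (hQ : Q.Encloses τ (3 ^ (-w))) (hk : 2 * w.re = k) :
    (Enclosure.ofChiRatio W P Q k).Encloses τ (chiRatio w) := by
  have h1 := encloses_one τ
  have hre : 0 ≤ w.re := by linarith [k.cast_nonneg (α := ℝ)]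
  have hgamma :
      (Enclosure.ofGammaRatio (W * recip 2 + 1) 5).Encloses τ (gammaRatio (w / 2 + 1)) := by
    refine ((hW.mul hτ (encloses_recip τ 2)).add h1).ofGammaRatio hτ 5 ?_ ?_ <;>
    · simp
      linarith
  rw [chiRatio_eq hre]
  refine ((encloses_sqrt_pi hτ).mul hτ (hW.ofSubOneMulZeta hτ hP hQ hk)).mul hτ
    ((hgamma.mul hτ ((hW.add h1).ofSubOneMulZeta hτ ?_ ?_ ?_)).inv hτ)
  · exact Encloses.natCast_cpow_shift (n := 2) (by norm_num) hτ hP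
  · exact Encloses.natCast_cpow_shift (n := 3) (by norm_num) hτ hQ
  · simp
    linarith

lemma natCast_cpow_neg_two_mul_sub_one {n : ℕ} (hn : n ≠ 0) (w : ℂ) :
    (n : ℂ) ^ (-(2 * w - 1)) = n * (n ^ (-w) * n ^ (-w)) := by
  have hn' : (n : ℂ) ≠ 0 := by exact_mod_cast hn
  rw [show -(2 * w - 1) = 1 + (-w + -w) by ring, cpow_add _ _ hn', cpow_add _ _ hn', cpow_one]

lemma encloses_chiRatio_two_mul_sub_one {S : Enclosure} (t : ℕ) (hτ : |τ| ≤ 1)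
    (hS : S.Encloses τ s) (hP : P.Encloses τ (2 ^ (-s))) (hQ : Q.Encloses τ (3 ^ (-s)))
    (hs : s.re = 1 / 2) :
    (if t < 6 * scale then Enclosure.ofChiRatio (2 * S - 1) (2 * (P * P)) (3 * (Q * Q)) 0
      else jet 0 0 scale).Encloses τ (chiRatio (2 * s - 1)) := by
  split_ifs
  · refine Encloses.ofChiRatio hτ (((encloses_two τ).mul hτ hS).sub (encloses_one τ)) ?_ ?_ ?_
    · have := natCast_cpow_neg_two_mul_sub_one (n := 2) (by norm_num) s
      push_cast at this
      rw [this]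
      exact (encloses_two τ).mul hτ (hP.mul hτ hP)
    · have := natCast_cpow_neg_two_mul_sub_one (n := 3) (by norm_num) s
      push_cast at this
      rw [this]
      exact (encloses_three τ).mul hτ (hQ.mul hτ hQ)
    · simp [hs]
  · have hle := norm_chiRatio_le_one (w := 2 * s - 1) (by simp [hs])
    simpa [encloses_jet] using mul_le_of_le_one_right scale_pos.le hle

lemma Encloses.ofZ2HalfDivNormalizer {S R R' R'' : Enclosure} (hτ : |τ| ≤ 1)
    (hs : 1 / 2 ≤ s.re) (hs1 : s ≠ 1) (hS : S.Encloses τ s) (hR : R.Encloses τ (chiRatio s))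
    (hR' : R'.Encloses τ (chiRatio (s + 1))) (hR'' : R''.Encloses τ (chiRatio (2 * s - 1))) :
    (Enclosure.ofZ2HalfDivNormalizer S R R' R'').Encloses τ (Z2Half s / normalizer s) := by
  have h1 := encloses_one τ
  have h2 := encloses_two τ
  have h3 := encloses_three τ
  have hpi : pi.Encloses τ Real.pi := encloses_pi
  have hD := (((hpi.mul hτ (encloses_recip τ 3)).sub h1).mul hτ hS).add h3
  have hcoeff := ((h3.mul hτ hpi).mul hτ ((hpi.add h3).inv hτ)).neg
  have hsub1 := hS.sub h1
  have hsub3 := hS.sub h3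
  have hA : A = Real.pi * ((3 : ℕ) : ℂ)⁻¹ - 1 := by simp [A, div_eq_mul_inv]
  have hsymm : symmetricCoeff = -(3 * Real.pi * (Real.pi + 3 : ℂ)⁻¹) := by
    rw [symmetricCoeff, div_eq_mul_inv, neg_mul, neg_mul]
  rw [Z2Half_div_normalizer_eq hs hs1, hA, hsymm]
  exact (((hD.mul hτ (hsub1.mul hτ hsub1)).sub
      (((h2.mul hτ hsub1).mul hτ hsub3).mul hτ hR')).sub
    ((((hS.add h2).mul hτ hsub3).sub
      ((hcoeff.mul hτ (hS.add h1)).mul hτ (h1.add hR''))).mul hτ (hR.mul hτ hR'))).mul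
    hτ ((hD.mul hτ (hS.mul hτ hsub1)).inv hτ)

lemma encloses_segment {t h : ℕ} (hs : s.re = 1 / 2) (him : scale * s.im = t + h * τ) :
    (segment t h).Encloses τ s := by
  have heq : (scale : ℂ) * s =
      ((⟨scale / 2, t⟩ : GaussianInt) : ℂ) + ((⟨0, h⟩ : GaussianInt) : ℂ) * τ := by
    apply Complex.ext
    · norm_num [GaussianInt.toComplex_def', hs, scale]
    · simp [GaussianInt.toComplex_def', him]
  rw [segment, encloses_jet, heq, sub_self]
  simp

lemma encloses_ofSegment {t h : ℕ} (hτ : |τ| ≤ 1) (hs : s.re = 1 / 2)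
    (him : scale * s.im = t + h * τ) :
    (ofSegment t h).Encloses τ (Z2Half s / normalizer s) := by
  have hS := encloses_segment hs him
  have hP := encloses_logTwo.exp_neg_log_mul hτ two_pos hS
  have hQ := encloses_logThree.exp_neg_log_mul hτ three_pos hS
  push_cast at hP hQ
  refine hS.ofZ2HalfDivNormalizer hτ hs.ge (by rintro rfl; norm_num at hs)
    (hS.ofChiRatio hτ hP hQ (by simp [hs])) ?_
    (encloses_chiRatio_two_mul_sub_one t hτ hS hP hQ hs)
  exact (hS.add (encloses_one τ)).ofChiRatio hτ (hP.natCast_cpow_shift (n := 2) (by norm_num) hτ)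
    (hQ.natCast_cpow_shift (n := 3) (by norm_num) hτ) (by simp [hs]; norm_num)

lemma Encloses.re_ge (hτ : |τ| ≤ 1) (hE : E.Encloses τ z) (hre : E.reGe) :
    1 / 100 ≤ z.re := by
  rcases E with _ | ⟨c, d, r⟩
  · simp [reGe] at hre
  have hre' : scale + 100 * (normBound d + r : ℝ) ≤ 100 * c.re := by
    exact_mod_cast of_decide_eq_true hre
  rw [encloses_jet] at hE
  have hslope : ‖(d : ℂ) * τ‖ ≤ normBound d := norm_mul_ofReal_le hτ (norm_le_normBound d)
  have hdist : ‖(c : ℂ) - scale * z‖ ≤ normBound d + r := by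
    have := norm_add_le_of_le hslope hE
    rw [← norm_neg] at this
    refine (congrArg norm ?_).trans_le this
    ring
  have hcenter := (re_le_norm _).trans hdist
  have hscale := scale_pos
  rw [sub_re, ← ofReal_natCast, re_ofReal_mul, ← GaussianInt.intCast_re] at hcenter
  nlinarith

lemma re_ge_of_coverCheck {t : ℕ} {hs : List ℕ} (hcheck : coverCheck t hs) (hre : s.re = 1 / 2)
    (hlow : t ≤ scale * s.im) (hhigh : s.im < 25) :
    1 / 100 ≤ (Z2Half s / normalizer s).re := by
  induction hs generalizing t with
  | nil =>
    have ht : (25 * scale : ℝ) ≤ t := by exact_mod_cast of_decide_eq_true hcheck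
    nlinarith [scale_pos]
  | cons h hs ih =>
    rw [coverCheck, Bool.and_eq_true] at hcheck
    obtain ⟨hsegment, hrest⟩ := hcheck
    rcases le_total (t + 2 * h : ℝ) (scale * s.im) with hle | hle
    · exact ih hrest (by exact_mod_cast hle)
    · set τ : ℝ := (scale * s.im - (t + h)) / h
      have hτ : |τ| ≤ 1 := by
        rw [abs_div, Nat.abs_cast]
        refine div_le_one_of_le₀ (abs_le.mpr ⟨?_, ?_⟩) (Nat.cast_nonneg h) <;> linarith
      have hzero : (h : ℝ) = 0 → scale * s.im - (t + h) = 0 := fun h0 => by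
        rw [h0] at hle ⊢
        linarith
      refine (encloses_ofSegment hτ hre ?_).re_ge hτ hsegment
      rw [mul_div_cancel_of_imp' hzero]
      push_cast
      ring

/-- Half-lengths of segments which together cover the imaginary parts from `0` to `25`. -/
def segmentLengths : List ℕ :=
  [(32, 64), (16, 32), (16, 16), (8, 8), (8, 32), (4, 16), (4, 8), (34, 4)].flatMap
    fun (n, q) => List.replicate n (scale / q)

lemma coverCheck_segmentLengths : coverCheck 0 segmentLengths := by decide +kernel

end Enclosure

section Conclusion

variable {s : ℂ}

lemma A_conj : conj A = A := by rw [A_eq_ofReal, conj_ofReal]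

lemma symmetricCoeff_conj : conj symmetricCoeff = symmetricCoeff := by
  simp [symmetricCoeff, conj_ofNat]

lemma normalizer_conj (s : ℂ) : normalizer (conj s) = conj (normalizer s) := by
  simp [normalizer, ← chi_conj, A_conj, conj_ofNat]

lemma Z2Half_conj (hs : s * (s - 1) * (s + 1) ≠ 0) : Z2Half (conj s) = conj (Z2Half s) := by
  have hs' : conj (s * (s - 1) * (s + 1)) ≠ 0 := (map_ne_zero _).mpr hs
  refine mul_left_cancel₀ hs' ?_
  rw [← map_mul, mul_Z2Half_eq s]
  simpa [← chi_conj, A_conj, symmetricCoeff_conj, conj_ofNat] using mul_Z2Half_eq (conj s)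

lemma mul_ne_zero_of_re_eq_half (hs : s.re = 1 / 2) : s * (s - 1) * (s + 1) ≠ 0 := by
  refine mul_ne_zero (mul_ne_zero ?_ (sub_ne_zero.mpr ?_)) (add_one_ne_zero_of_re (by linarith)) <;>
  · rintro rfl
    norm_num at hs

theorem re_Z2Half_div_normalizer_ge_on_line (hs : s.re = 1 / 2) :
    1 / 100 ≤ (Z2Half s / normalizer s).re := by
  rcases le_or_gt 25 |s.im| with hlarge | hsmall
  · exact re_Z2Half_div_normalizer_ge_of_large hs hlarge
  obtain ⟨hlow, hhigh⟩ := abs_lt.mp hsmall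
  have hcheck := Enclosure.coverCheck_segmentLengths
  rcases le_total 0 s.im with him | him
  · exact Enclosure.re_ge_of_coverCheck hcheck hs (by simpa using mul_nonneg scale_pos.le him) hhigh
  · have hconj := Enclosure.re_ge_of_coverCheck (s := conj s) hcheck (by simpa using hs)
      (by simpa using mul_nonpos_of_nonneg_of_nonpos scale_pos.le him) (by rw [conj_im]; linarith)
    rwa [Z2Half_conj (mul_ne_zero_of_re_eq_half hs), normalizer_conj, ← map_div₀, conj_re] at hconj

-- Phragmén–Lindelöf for `exp (-f)` transports a lower bound for `re f` from the boundary.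
lemma re_ge_of_re_ge_on_line {f : ℂ → ℂ} {σ c C : ℝ}
    (hf : ∀ z : ℂ, σ ≤ z.re → DifferentiableAt ℂ f z) (hbound : ∀ z : ℂ, σ ≤ z.re → ‖f z‖ ≤ C)
    (hline : ∀ z : ℂ, z.re = σ → c ≤ (f z).re) {z : ℂ} (hz : σ ≤ z.re) : c ≤ (f z).re := by
  have hexp : ‖exp (-f z)‖ ≤ Real.exp (-c) := by
    refine norm_le_of_norm_le_on_line (M := Real.exp C) (k := 0) (f := fun z => exp (-f z))
      (fun w hw => (hf w hw).neg.cexp) (fun w hw => ?_) (fun w hw => ?_) hz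
    · rw [norm_exp, pow_zero, mul_one, neg_re]
      gcongr
      exact (neg_le_abs _).trans ((abs_re_le_norm _).trans (hbound w hw.le))
    · rw [norm_exp, neg_re]
      gcongr
      exact hline w hw
  rw [norm_exp, neg_re, Real.exp_le_exp] at hexp
  linarith

lemma re_Z2Half_div_normalizer_ge (hs : 1 / 2 ≤ s.re) :
    1 / 100 ≤ (Z2Half s / normalizer s).re := by
  obtain ⟨C, hC⟩ := exists_norm_Z2Half_div_normalizer_le
  exact re_ge_of_re_ge_on_line (f := fun s => Z2Half s / normalizer s)
    (fun _ => differentiableAt_Z2Half_div_normalizer) hC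
    (fun _ => re_Z2Half_div_normalizer_ge_on_line) hs

lemma Z2Half_ne_zero (hs : 1 / 2 ≤ s.re) : Z2Half s ≠ 0 := fun h => by
  have := re_Z2Half_div_normalizer_ge hs
  norm_num [h] at this

/-- The quotient of the two terms in the factorization `Z2_eq_mul_sub`; it has norm `1` on the
critical line, and `Z2` has no zeros to the right of it other than `1` and `2` as soon as the
quotient avoids the value `1` there. -/
noncomputable def reflectionQuotient (s : ℂ) : ℂ := Z2Half (1 - s) / Z2Half s

lemma differentiableAt_reflectionQuotient (hs : 1 / 2 ≤ s.re) :
    DifferentiableAt ℂ reflectionQuotient s :=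
  (differentiable_Z2Half.comp (differentiable_id.const_sub 1)).differentiableAt.div
    differentiable_Z2Half.differentiableAt (Z2Half_ne_zero hs)

lemma norm_reflectionQuotient_eq_one (hs : s.re = 1 / 2) : ‖reflectionQuotient s‖ = 1 := by
  have hreflect : 1 - s = conj s := by
    apply Complex.ext
    · simp [hs]
      norm_num
    · simp
  rw [reflectionQuotient, hreflect, Z2Half_conj (mul_ne_zero_of_re_eq_half hs), norm_div,
    norm_conj, div_self (norm_ne_zero_iff.mpr (Z2Half_ne_zero hs.ge))]

lemma exists_norm_reflectionQuotient_le :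
    ∃ C, ∀ s : ℂ, 1 / 2 ≤ s.re → ‖reflectionQuotient s‖ ≤ C := by
  obtain ⟨C, hC⟩ := exists_norm_Z2Half_one_sub_div_normalizer_le
  refine ⟨C / (1 / 100), fun s hs => ?_⟩
  have hlower := (re_Z2Half_div_normalizer_ge hs).trans (re_le_norm _)
  have hupper := hC s hs
  have := (norm_nonneg _).trans hupper
  rw [reflectionQuotient, ← div_div_div_cancel_right₀ (normalizer_ne_zero hs), norm_div]
  gcongr

lemma norm_reflectionQuotient_le_one (hs : 1 / 2 ≤ s.re) : ‖reflectionQuotient s‖ ≤ 1 := by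
  obtain ⟨C, hC⟩ := exists_norm_reflectionQuotient_le
  exact norm_le_of_norm_le_on_line (M := C) (k := 0)
    (fun _ => differentiableAt_reflectionQuotient) (fun z hz => by simpa using hC z hz.le)
    (fun _ hz => (norm_reflectionQuotient_eq_one hz).le) hs

lemma bernoulli_six : bernoulli 6 = 1 / 42 := by
  have h5 : bernoulli' 5 = 0 := bernoulli'_eq_zero_of_odd (by decide) (by norm_num)
  rw [bernoulli_eq_bernoulli'_of_ne_one (by norm_num), bernoulli'_def]
  norm_num [Finset.sum_range_succ, h5, Nat.choose]

lemma chi_six : chi 6 = 4 * Real.pi ^ 3 / 63 := by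
  have hpi : (Real.pi : ℂ) ≠ 0 := ofReal_ne_zero.mpr Real.pi_ne_zero
  have hzeta : riemannZeta 6 = Real.pi ^ 6 / 945 := by
    have := riemannZeta_two_mul_nat (k := 3) (by norm_num)
    norm_num [bernoulli_six, Nat.factorial] at this
    rw [this]
    ring
  have hcpow : (Real.pi : ℂ) ^ (-6 / 2 : ℂ) = (Real.pi ^ 3 : ℂ)⁻¹ := by
    rw [show (-6 / 2 : ℂ) = -(3 : ℕ) by norm_num, cpow_neg, cpow_natCast]
  have hGamma : Gamma (6 / 2 + 1 : ℂ) = 6 := by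
    rw [show (6 / 2 + 1 : ℂ) = (3 : ℕ) + 1 by norm_num, Gamma_nat_eq_factorial]
    norm_num [Nat.factorial]
  rw [chi_eq_mul_subOneMulZeta (by norm_num), subOneMulZeta_eq (by norm_num) (by norm_num), hzeta,
    hcpow, hGamma]
  field_simp
  norm_num

lemma Z2_three :
    Z2 3 = 12 * chi 5 * (4 * Real.pi ^ 4 / 189 - 16 * Real.pi / 3 + 15 : ℝ) := by
  norm_num [Z2, f2, chi_six, chi_neg_one, chi_zero, A]
  ring

lemma Z2_three_ne_zero : Z2 3 ≠ 0 := by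
  rw [Z2_three]
  refine mul_ne_zero (mul_ne_zero (by norm_num) (chi_ne_zero (by norm_num))) ?_
  have hpi := Real.pi_gt_d2
  have hpi' := Real.pi_lt_d2
  refine ofReal_ne_zero.mpr (ne_of_gt ?_)
  nlinarith [sq_nonneg (Real.pi ^ 2 - (314 / 100) ^ 2), sq_nonneg (Real.pi - 314 / 100)]

-- By the maximum principle equality would make the quotient constant, hence equal to its value
-- `1` at `1 / 2`, and `Z2` would vanish identically.
lemma norm_reflectionQuotient_lt_one (hs : 1 / 2 < s.re) : ‖reflectionQuotient s‖ < 1 := by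
  refine (norm_reflectionQuotient_le_one hs.le).lt_of_ne fun hone => ?_
  set U : Set ℂ := {z | 1 / 2 < z.re}
  have hclosure : closure U = {z | 1 / 2 ≤ z.re} := closure_setOfPred_lt_re _
  have hdiff : DiffContOnCl ℂ reflectionQuotient U := by
    refine DifferentiableOn.diffContOnCl fun z hz => ?_
    rw [hclosure] at hz
    exact (differentiableAt_reflectionQuotient hz).differentiableWithinAt
  have hmax : IsMaxOn (norm ∘ reflectionQuotient) U s := fun z hz =>
    (norm_reflectionQuotient_le_one (le_of_lt hz)).trans hone.ge
  have hconst := eqOn_closure_of_isPreconnected_of_isMaxOn_norm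
    (convex_halfSpace_re_gt _).isPreconnected (isOpen_lt continuous_const continuous_re) hdiff
    hs hmax
  rw [hclosure] at hconst
  have hhalf : reflectionQuotient (1 / 2) = 1 := by
    rw [reflectionQuotient, sub_half, div_self (Z2Half_ne_zero (by norm_num))]
  have hthree : reflectionQuotient 3 = 1 :=
    (hconst (by norm_num : 1 / 2 ≤ (3 : ℂ).re)).trans
      ((hconst (by norm_num : 1 / 2 ≤ (1 / 2 : ℂ).re)).symm.trans hhalf)
  rw [reflectionQuotient, div_eq_one_iff_eq (Z2Half_ne_zero (by norm_num))] at hthree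
  exact Z2_three_ne_zero (by rw [Z2_eq_mul_sub, hthree, sub_self, mul_zero])

theorem Z2Half_sub_ne_zero (hs : s.re ≠ 1 / 2) : Z2Half s - Z2Half (1 - s) ≠ 0 := by
  have hright {w : ℂ} (hw : 1 / 2 < w.re) : Z2Half w - Z2Half (1 - w) ≠ 0 := fun h => by
    have hquot : reflectionQuotient w = 1 := by
      rw [reflectionQuotient, ← sub_eq_zero.mp h, div_self (Z2Half_ne_zero hw.le)]
    simpa [hquot] using norm_reflectionQuotient_lt_one hw
  rcases hs.lt_or_gt with hlt | hgt
  · have := hright (w := 1 - s) (by rw [sub_re, one_re]; linarith)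
    rwa [sub_sub_cancel, ← neg_sub, neg_ne_zero] at this
  · exact hright hgt

lemma deriv_Z2_of_root (hs : (s - 2) * (s + 1) * s * (s - 1) = 0) :
    deriv Z2 s = (4 * s ^ 3 - 6 * s ^ 2 - 2 * s + 2) * (Z2Half s - Z2Half (1 - s)) := by
  have hpoly : HasDerivAt (fun z : ℂ => (z - 2) * (z + 1) * z * (z - 1))
      (4 * s ^ 3 - 6 * s ^ 2 - 2 * s + 2) s := by
    have hid := hasDerivAt_id s
    refine ((((hid.sub_const 2).mul (hid.add_const 1)).mul hid).mul (hid.sub_const 1)).congr_deriv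
      ?_
    simp only [id, Pi.mul_apply]
    ring
  have hdiff : Differentiable ℂ fun z => Z2Half z - Z2Half (1 - z) :=
    differentiable_Z2Half.sub (differentiable_Z2Half.comp (differentiable_id.const_sub 1))
  have hmul := hpoly.mul (hdiff s).hasDerivAt
  rw [hs, zero_mul, add_zero] at hmul
  rw [← hmul.deriv]
  exact congrArg (deriv · s) (funext Z2_eq_mul_sub)

end Conclusion

theorem Z2_zeros (ρ : ℂ) :
    (Z2 ρ = 0 → ρ ∉ ({-1, 0, 1, 2} : Set ℂ) → ρ.re = 1 / 2) ∧
    (ρ ∈ ({-1, 0, 1, 2} : Set ℂ) → Z2 ρ = 0 ∧ deriv Z2 ρ ≠ 0) := by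
  constructor
  · intro hzero hρ
    by_contra hre
    simp only [mem_insert_iff, mem_singleton_iff, not_or] at hρ
    obtain ⟨hneg, h0, h1, h2⟩ := hρ
    rw [Z2_eq_mul_sub] at hzero
    refine mul_ne_zero (mul_ne_zero (mul_ne_zero (mul_ne_zero ?_ ?_) h0) ?_)
      (Z2Half_sub_ne_zero hre) hzero
    · exact sub_ne_zero.mpr h2
    · exact fun h => hneg (eq_neg_of_add_eq_zero_left h)
    · exact sub_ne_zero.mpr h1
  · intro hρ
    have hroot : (ρ - 2) * (ρ + 1) * ρ * (ρ - 1) = 0 := by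
      rcases hρ with rfl | rfl | rfl | rfl <;> norm_num
    have hre : ρ.re ≠ 1 / 2 := by rcases hρ with rfl | rfl | rfl | rfl <;> norm_num
    have hslope : 4 * ρ ^ 3 - 6 * ρ ^ 2 - 2 * ρ + 2 ≠ 0 := by
      rcases hρ with rfl | rfl | rfl | rfl <;> norm_num
    rw [Z2_eq_mul_sub, hroot, zero_mul, deriv_Z2_of_root hroot]
    exact ⟨rfl, mul_ne_zero hslope (Z2Half_sub_ne_zero hre)⟩
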